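/- arXiv:2504.18976 — 2 statements merged into one kernel-verified Lean document; each statement's English description precedes it below -/
import Mathlib

section
/- Let n ≥ 1, let 0 < ε < 1, 0 < α < 1 − ε and T > 1 + α − ε. There exists a constant C > 0 such that every classical solution u of the wave equation on [0,T]×closure(Ω), where Ω is the open unit ball of ℝⁿ, with Dirichlet boundary conditions and initial data supported in the closed ball of radius α, satisfies ∫_Ω ( |∇ₓu(0,x)|² + (∂ₜu(0,x))² ) dx ≤ C ∫_0^T ∫_{1−ε<|x|<1} (∂ₜu(t,x))² dx dt. -/
open MeasureTheory

/-- Partial derivative in time of a function of (time, space). -/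
noncomputable def pdt {n : ℕ} (u : ℝ → EuclideanSpace ℝ (Fin n) → ℝ) :
    ℝ → EuclideanSpace ℝ (Fin n) → ℝ := fun t x => deriv (fun s => u s x) t

/-- The Euclidean Laplacian of `f` at `x`, as the sum of the second derivatives
along the coordinate directions. -/
noncomputable def lap {n : ℕ} (f : EuclideanSpace ℝ (Fin n) → ℝ)
    (x : EuclideanSpace ℝ (Fin n)) : ℝ :=
  ∑ i, iteratedFDeriv ℝ 2 f x ![EuclideanSpace.single i 1, EuclideanSpace.single i 1]


namespace ObsBall

open Metric Set

lemma lip_closedBall {n : ℕ} (f : EuclideanSpace ℝ (Fin n) → ℝ)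
    (hf : ContDiffOn ℝ 1 f (closedBall 0 1)) :
    ∃ C : NNReal, LipschitzOnWith C f (closedBall 0 1) := by
  have hu : UniqueDiffOn ℝ (closedBall (0 : EuclideanSpace ℝ (Fin n)) 1) :=
    uniqueDiffOn_convex (convex_closedBall _ _)
      ⟨0, ball_subset_interior_closedBall (mem_ball_self one_pos)⟩
  have hc := hf.continuousOn_fderivWithin hu le_rfl
  obtain ⟨C, hC⟩ := (isCompact_closedBall (0 : EuclideanSpace ℝ (Fin n)) 1).exists_bound_of_continuousOn hc
  refine ⟨C.toNNReal, (convex_closedBall _ _).lipschitzOnWith_of_nnnorm_fderivWithin_le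
    (hf.differentiableOn one_ne_zero) fun x hx => ?_⟩
  rw [← NNReal.coe_le_coe, coe_nnnorm]
  exact (hC x hx).trans (Real.le_coe_toNNReal C)

lemma space_div {n : ℕ} (f : EuclideanSpace ℝ (Fin n) → ℝ)
    (hf : ContDiffOn ℝ 1 f (closedBall 0 1)) (h0 : ∀ x, ‖x‖ = 1 → f x = 0)
    (v : EuclideanSpace ℝ (Fin n)) :
    ∫ x in ball (0 : EuclideanSpace ℝ (Fin n)) 1, fderiv ℝ f x v = 0 := by
  obtain ⟨C, hC⟩ := lip_closedBall f hf
  set g := (closedBall (0 : EuclideanSpace ℝ (Fin n)) 1).indicator f with hg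
  have key : ∀ x y : EuclideanSpace ℝ (Fin n), ‖x‖ ≤ 1 → 1 < ‖y‖ → |f x| ≤ 2 * C * ‖x - y‖ := by
    intro x y hx hy
    have hy0 : (0 : ℝ) < ‖y‖ := by linarith
    have hw : ‖(‖y‖⁻¹ • y)‖ = 1 := by
      rw [norm_smul, norm_inv, norm_norm, inv_mul_cancel₀ hy0.ne']
    have h1 := hC.dist_le_mul x (by simpa using hx) (‖y‖⁻¹ • y) (by simp only [mem_closedBall, dist_zero_right]; exact hw.le)
    rw [h0 _ hw, Real.dist_eq, sub_zero, dist_eq_norm] at h1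
    have h2 : ‖y - ‖y‖⁻¹ • y‖ = ‖y‖ - 1 := by
      have : y - ‖y‖⁻¹ • y = (1 - ‖y‖⁻¹) • y := by rw [sub_smul, one_smul]
      rw [this, norm_smul, Real.norm_of_nonneg (by rw [sub_nonneg]; exact inv_le_one_of_one_le₀ hy.le)]
      field_simp
    have h3 : ‖x - ‖y‖⁻¹ • y‖ ≤ ‖x - y‖ + ‖y - ‖y‖⁻¹ • y‖ := norm_sub_le_norm_sub_add_norm_sub ..
    have h4 : ‖y‖ - ‖x‖ ≤ ‖x - y‖ := by rw [norm_sub_rev]; exact norm_sub_norm_le _ _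
    have h5 : (0 : ℝ) ≤ C := C.2
    calc |f x| ≤ C * ‖x - ‖y‖⁻¹ • y‖ := h1
      _ ≤ C * (2 * ‖x - y‖) := by gcongr; linarith
      _ = _ := by ring
  have hL : LipschitzWith (2 * C) g := by
    refine LipschitzWith.of_dist_le_mul fun x y => ?_
    rw [Real.dist_eq, dist_eq_norm]
    push_cast
    by_cases hx : ‖x‖ ≤ 1 <;> by_cases hy : ‖y‖ ≤ 1
    · have h1 := hC.dist_le_mul x (by simpa using hx) y (by simpa using hy)
      rw [Real.dist_eq, dist_eq_norm] at h1
      have : (0 : ℝ) ≤ C * ‖x - y‖ := by positivity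
      simp only [hg, indicator, mem_closedBall, dist_zero_right, hx, hy, if_true]
      linarith
    · simp only [hg, indicator, mem_closedBall, dist_zero_right, hx, hy, if_true, if_false, sub_zero]
      exact key x y hx (not_le.1 hy)
    · simp only [hg, indicator, mem_closedBall, dist_zero_right, hx, hy, if_true, if_false, zero_sub, abs_neg]
      rw [norm_sub_rev]
      exact key y x hy (not_le.1 hx)
    · simp only [hg, indicator, mem_closedBall, dist_zero_right, hx, hy, if_false, sub_zero, abs_zero]
      positivity
  have hcs : HasCompactSupport g :=
    HasCompactSupport.of_support_subset_isCompact (isCompact_closedBall 0 1) (support_indicator_subset)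
  have h1 := LipschitzWith.integral_lineDeriv_mul_eq (μ := volume) (LipschitzWith.const (1:ℝ)) hL hcs (-v)
  have h2 : ∫ x, lineDeriv ℝ g x v = 0 := by
    simpa [lineDeriv] using h1.symm
  rw [← h2, ← integral_indicator measurableSet_ball]
  apply integral_congr_ae
  have hs : ∀ᵐ x : EuclideanSpace ℝ (Fin n), x ∉ sphere (0 : EuclideanSpace ℝ (Fin n)) 1 :=
    measure_eq_zero_iff_ae_notMem.1 (Measure.addHaar_sphere_of_ne_zero volume 0 one_ne_zero)
  filter_upwards [hs] with x hx
  simp only [mem_sphere, dist_zero_right] at hx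
  rcases lt_or_gt_of_ne hx with h | h
  · have hb : x ∈ ball (0 : EuclideanSpace ℝ (Fin n)) 1 := by simpa using h
    rw [indicator_of_mem hb]
    have hd : DifferentiableAt ℝ f x :=
      (hf.differentiableOn one_ne_zero).differentiableAt (closedBall_mem_nhds_of_mem hb)
    have he : g =ᶠ[nhds x] f := by
      filter_upwards [closedBall_mem_nhds_of_mem hb] with y hy
      exact indicator_of_mem hy _
    rw [← hd.lineDeriv_eq_fderiv]
    exact he.symm.lineDeriv_eq
  · have hb : x ∉ ball (0 : EuclideanSpace ℝ (Fin n)) 1 := by simpa using h.le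
    rw [indicator_of_notMem hb]
    have he : g =ᶠ[nhds x] fun _ => 0 := by
      have : (closedBall (0 : EuclideanSpace ℝ (Fin n)) 1)ᶜ ∈ nhds x :=
        isClosed_closedBall.isOpen_compl.mem_nhds (by simpa using h)
      filter_upwards [this] with y hy
      exact indicator_of_notMem hy _
    rw [he.lineDeriv_eq]
    simp [lineDeriv]

/-- The closed space-time cylinder. -/
def KK (n : ℕ) (T : ℝ) : Set (ℝ × EuclideanSpace ℝ (Fin n)) := Icc 0 T ×ˢ closedBall 0 1
/-- The open space-time cylinder. -/
def QQ (n : ℕ) (T : ℝ) : Set (ℝ × EuclideanSpace ℝ (Fin n)) := Ioo 0 T ×ˢ ball 0 1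

lemma isOpen_QQ (n : ℕ) (T : ℝ) : IsOpen (QQ n T) := isOpen_Ioo.prod isOpen_ball
lemma QQ_sub (n : ℕ) (T : ℝ) : QQ n T ⊆ KK n T := prod_mono Ioo_subset_Icc_self ball_subset_closedBall
lemma KK_nhds {n : ℕ} {T : ℝ} {z} (hz : z ∈ QQ n T) : KK n T ∈ nhds z :=
  Filter.mem_of_superset ((isOpen_QQ n T).mem_nhds hz) (QQ_sub n T)
lemma KK_compact (n : ℕ) (T : ℝ) : IsCompact (KK n T) := isCompact_Icc.prod (isCompact_closedBall _ _)
lemma KK_unique (n : ℕ) (T : ℝ) (hT : 0 < T) : UniqueDiffOn ℝ (KK n T) :=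
  (uniqueDiffOn_Icc hT).prod (uniqueDiffOn_convex (convex_closedBall _ _)
      ⟨0, ball_subset_interior_closedBall (mem_ball_self one_pos)⟩)

lemma intOn {n : ℕ} {T : ℝ} {f : ℝ × EuclideanSpace ℝ (Fin n) → ℝ} (hf : ContinuousOn f (KK n T)) :
    IntegrableOn f (QQ n T) :=
  (hf.integrableOn_compact (KK_compact n T)).mono_set (QQ_sub n T)

lemma intB {n : ℕ} {f : EuclideanSpace ℝ (Fin n) → ℝ} (hf : ContinuousOn f (closedBall 0 1)) :
    IntegrableOn f (ball 0 1) :=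
  (hf.integrableOn_compact (isCompact_closedBall _ _)).mono_set ball_subset_closedBall

lemma slice_cont {n : ℕ} {T : ℝ} {f : ℝ × EuclideanSpace ℝ (Fin n) → ℝ} (hf : ContinuousOn f (KK n T))
    {t : ℝ} (ht : t ∈ Icc 0 T) : ContinuousOn (fun x => f (t, x)) (closedBall 0 1) :=
  hf.comp (by fun_prop) (fun x hx => ⟨ht, hx⟩)

lemma slice_contDiff {n : ℕ} {T : ℝ} {f : ℝ × EuclideanSpace ℝ (Fin n) → ℝ} (hf : ContDiffOn ℝ 1 f (KK n T))
    {t : ℝ} (ht : t ∈ Icc 0 T) : ContDiffOn ℝ 1 (fun x => f (t, x)) (closedBall 0 1) :=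
  hf.comp (by fun_prop) (fun x hx => ⟨ht, hx⟩)

lemma slice_deriv {n : ℕ} {T : ℝ} {f : ℝ × EuclideanSpace ℝ (Fin n) → ℝ} (hf : ContDiffOn ℝ 1 f (KK n T))
    {t : ℝ} (ht : t ∈ Icc 0 T) {x : EuclideanSpace ℝ (Fin n)} (hx : x ∈ ball 0 1) :
    HasFDerivAt (fun y => f (t, y))
      ((fderivWithin ℝ f (KK n T) (t, x)).comp (ContinuousLinearMap.inr ℝ ℝ _)) x := by
  have h1 := (hf.differentiableOn one_ne_zero (t, x) ⟨ht, ball_subset_closedBall hx⟩).hasFDerivWithinAt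
  have h2 : HasFDerivWithinAt (fun y => (t, y)) (ContinuousLinearMap.inr ℝ ℝ _)
    (closedBall (0 : EuclideanSpace ℝ (Fin n)) 1) x := (hasFDerivAt_prodMk_right t x).hasFDerivWithinAt
  exact (h1.comp x h2 (fun y hy => ⟨ht, hy⟩)).hasFDerivAt (closedBall_mem_nhds_of_mem hx)

lemma slice_time {n : ℕ} {T : ℝ} {f : ℝ × EuclideanSpace ℝ (Fin n) → ℝ} (hf : ContDiffOn ℝ 1 f (KK n T))
    {t : ℝ} (ht : t ∈ Icc 0 T) {x : EuclideanSpace ℝ (Fin n)} (hx : x ∈ closedBall 0 1) :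
    HasDerivWithinAt (fun s => f (s, x)) (fderivWithin ℝ f (KK n T) (t, x) (1, 0)) (Icc 0 T) t := by
  have h1 := (hf.differentiableOn one_ne_zero (t, x) ⟨ht, hx⟩).hasFDerivWithinAt
  have h2 : HasFDerivWithinAt (fun s => (s, x)) (ContinuousLinearMap.inl ℝ ℝ _) (Icc 0 T) t :=
    (hasFDerivAt_prodMk_left t x).hasFDerivWithinAt
  have hm : MapsTo (fun s : ℝ => (s, x)) (Icc 0 T) (KK n T) := fun y hy => ⟨hy, hx⟩
  have h3 : HasFDerivWithinAt (fun s => f (s, x)) _ (Icc 0 T) t := h1.comp t h2 hm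
  have h4 := h3.hasDerivWithinAt
  simpa using h4

lemma QQ_integral {n : ℕ} {T : ℝ} {f : ℝ × EuclideanSpace ℝ (Fin n) → ℝ} (hf : ContinuousOn f (KK n T)) :
    ∫ z in QQ n T, f z = ∫ t in Ioo 0 T, ∫ x in ball 0 1, f (t, x) :=
  setIntegral_prod f (intOn hf)

lemma fw_cont {n : ℕ} {T : ℝ} (hT : 0 < T) {f : ℝ × EuclideanSpace ℝ (Fin n) → ℝ}
    (hf : ContDiffOn ℝ 1 f (KK n T)) (v) : ContinuousOn (fun z => fderivWithin ℝ f (KK n T) z v) (KK n T) :=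
  (hf.continuousOn_fderivWithin (KK_unique n T hT) le_rfl).clm_apply continuousOn_const

lemma div_space {n : ℕ} {T : ℝ} (hT : 0 < T) (F : ℝ × EuclideanSpace ℝ (Fin n) → ℝ)
    (hF : ContDiffOn ℝ 1 F (KK n T)) (h0 : ∀ t ∈ Icc 0 T, ∀ x, ‖x‖ = 1 → F (t, x) = 0)
    (v : EuclideanSpace ℝ (Fin n)) :
    ∫ z in QQ n T, fderivWithin ℝ F (KK n T) z (0, v) = 0 := by
  rw [QQ_integral (fw_cont hT hF _)]
  rw [setIntegral_congr_fun (g := fun _ => 0) measurableSet_Ioo, integral_zero]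
  intro t ht
  have ht' := Ioo_subset_Icc_self ht
  have h := space_div _ (slice_contDiff hF ht') (h0 t ht') v
  refine Eq.trans ?_ h
  refine setIntegral_congr_fun measurableSet_ball fun x hx => ?_
  simp [(slice_deriv hF ht' hx).fderiv]

lemma div_time {n : ℕ} {T : ℝ} (hT : 0 < T) (G : ℝ × EuclideanSpace ℝ (Fin n) → ℝ)
    (hG : ContDiffOn ℝ 1 G (KK n T)) :
    ∫ z in QQ n T, fderivWithin ℝ G (KK n T) z (1, 0) =
      (∫ x in ball 0 1, G (T, x)) - ∫ x in ball 0 1, G (0, x) := by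
  have hc := fw_cont hT hG (1, 0)
  rw [QQ_integral hc]
  have hi := intOn hc
  rw [integral_integral_swap (f := fun t x => fderivWithin ℝ G (KK n T) (t, x) (1, 0))]
  · rw [← integral_sub (intB (slice_cont hG.continuousOn (right_mem_Icc.2 hT.le)))
      (intB (slice_cont hG.continuousOn (left_mem_Icc.2 hT.le)))]
    refine setIntegral_congr_fun measurableSet_ball fun x hx => ?_
    have hx' := ball_subset_closedBall hx
    rw [← integral_Ioc_eq_integral_Ioo, ← intervalIntegral.integral_of_le hT.le]
    refine intervalIntegral.integral_eq_sub_of_hasDerivAt_of_le (f := fun s => G (s, x)) hT.le ?_ ?_ ?_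
    · exact hG.continuousOn.comp (by fun_prop) (fun s hs => ⟨hs, hx'⟩)
    · intro t ht
      exact (slice_time hG (Ioo_subset_Icc_self ht) hx').hasDerivAt (Icc_mem_nhds ht.1 ht.2)
    · apply ContinuousOn.intervalIntegrable
      rw [uIcc_of_le hT.le]
      exact hc.comp (by fun_prop) (fun s hs => ⟨hs, hx'⟩)
  · rw [Measure.prod_restrict]
    exact hi

/-- Space-time divergence identity. -/
lemma div_main {n : ℕ} {T : ℝ} (hT : 0 < T) (G H : ℝ × EuclideanSpace ℝ (Fin n) → ℝ)
    (F : Fin n → ℝ × EuclideanSpace ℝ (Fin n) → ℝ)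
    (hG : ContDiffOn ℝ 1 G (KK n T)) (hF : ∀ i, ContDiffOn ℝ 1 (F i) (KK n T))
    (h0 : ∀ i, ∀ t ∈ Icc 0 T, ∀ x, ‖x‖ = 1 → F i (t, x) = 0)
    (hH : ∀ z ∈ QQ n T, fderiv ℝ G z (1, 0) + ∑ i, fderiv ℝ (F i) z (0, EuclideanSpace.single i 1) = H z) :
    (∫ x in ball 0 1, G (T, x)) - ∫ x in ball 0 1, G (0, x) = ∫ z in QQ n T, H z := by
  have hm := (isOpen_QQ n T).measurableSet
  rw [← div_time hT G hG]
  have h1 : ∫ z in QQ n T, H z = ∫ z in QQ n T, (fderivWithin ℝ G (KK n T) z (1, 0) +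
      ∑ i, fderivWithin ℝ (F i) (KK n T) z (0, EuclideanSpace.single i 1)) := by
    refine setIntegral_congr_fun hm fun z hz => ?_
    simp only [fderivWithin_of_mem_nhds (KK_nhds hz), hH z hz]
  rw [h1, integral_add (intOn (fw_cont hT hG _)), integral_finsetSum]
  · simp [div_space hT _ (hF _) (h0 _)]
  · exact fun i _ => intOn (fw_cont hT (hF i) _)
  · exact integrable_finsetSum _ fun i _ => intOn (fw_cont hT (hF i) _)

end ObsBall

namespace ObsBall

open Metric Set

lemma cutoff (n : ℕ) (r0 r1 : ℝ) (h0 : 0 < r0) (h1 : r0 < r1) :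
    ∃ χ : EuclideanSpace ℝ (Fin n) → ℝ, ContDiff ℝ 1 χ ∧ (∀ x, 0 ≤ χ x) ∧ (∀ x, χ x ≤ 1) ∧
      (∀ x, ‖x‖ ≤ r0 → χ x = 0) ∧ (∀ x, r1 ≤ ‖x‖ → χ x = 1) ∧
      (∀ x, ‖x‖ ≤ r0 → fderiv ℝ χ x = 0) ∧
      ∃ N : ℝ, 0 ≤ N ∧ ∀ x, ∑ i, (fderiv ℝ χ x (EuclideanSpace.single i 1)) ^ 2 ≤ N ^ 2 := by
  let b : ContDiffBump (0 : EuclideanSpace ℝ (Fin n)) := ⟨r0, r1, h0, h1⟩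
  have hb : ContDiff ℝ 1 b := b.contDiff
  have hfd : ∀ x, fderiv ℝ (fun x => 1 - b x) x = - fderiv ℝ b x := by
    intro x; rw [fderiv_const_sub]
  have hz : ∀ x, ‖x‖ ≤ r0 → 1 - b x = 0 := fun x hx => by
    rw [b.one_of_mem_closedBall (by simpa using hx), sub_self]
  refine ⟨fun x => 1 - b x, contDiff_const.sub hb, fun x => sub_nonneg.2 b.le_one,
    fun x => by have := b.nonneg (x := x); linarith, hz, fun x hx => ?_, fun x hx => ?_, ?_⟩
  · change 1 - b x = 1
    rw [b.zero_of_le_dist (by simpa using hx), sub_zero]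
  · apply IsLocalMin.fderiv_eq_zero
    filter_upwards with y
    rw [hz x hx]
    exact sub_nonneg.2 b.le_one
  · have hcs : HasCompactSupport (fderiv ℝ b) := b.hasCompactSupport.fderiv ℝ
    obtain ⟨L, hL⟩ := hcs.exists_bound_of_continuous (hb.continuous_fderiv one_ne_zero)
    have hL0 : 0 ≤ L := (norm_nonneg _).trans (hL 0)
    refine ⟨L * (n + 1), by positivity, fun x => ?_⟩
    have : ∀ i : Fin n, (fderiv ℝ (fun x => 1 - b x) x (EuclideanSpace.single i 1)) ^ 2 ≤ L ^ 2 := by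
      intro i
      rw [hfd, ← sq_abs]
      have h := (fderiv ℝ b x).le_opNorm (EuclideanSpace.single i (1:ℝ))
      rw [PiLp.norm_single, norm_one, mul_one] at h
      have : |(-fderiv ℝ b x) (EuclideanSpace.single i 1)| ≤ L := by
        rw [neg_apply, abs_neg]
        exact h.trans (hL x)
      gcongr
    calc _ ≤ ∑ i : Fin n, L ^ 2 := Finset.sum_le_sum fun i _ => this i
      _ = n * L ^ 2 := by simp
      _ ≤ (L * (n + 1)) ^ 2 := by
        have : (0:ℝ) ≤ n := Nat.cast_nonneg n
        nlinarith [mul_nonneg this (sq_nonneg L), mul_nonneg (mul_nonneg this this) (sq_nonneg L), sq_nonneg L]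

/-- Directional derivative predicate. -/
def LD {X : Type*} [NormedAddCommGroup X] [NormedSpace ℝ X] (f : X → ℝ) (d : ℝ)
    (z w : X) : Prop :=
  DifferentiableAt ℝ f z ∧ fderiv ℝ f z w = d

section LD
section gen
variable {X : Type*} [NormedAddCommGroup X] [NormedSpace ℝ X] {f g : X → ℝ} {a b : ℝ} {z w : X}

lemma LD.add (hf : LD f a z w) (hg : LD g b z w) : LD (fun y => f y + g y) (a + b) z w :=
  ⟨hf.1.add hg.1, by rw [fderiv_fun_add hf.1 hg.1, ← hf.2, ← hg.2]; rfl⟩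
lemma LD.sub (hf : LD f a z w) (hg : LD g b z w) : LD (fun y => f y - g y) (a - b) z w :=
  ⟨hf.1.sub hg.1, by rw [fderiv_fun_sub hf.1 hg.1, ← hf.2, ← hg.2]; rfl⟩
lemma LD.neg (hf : LD f a z w) : LD (fun y => - f y) (- a) z w :=
  ⟨hf.1.neg, by rw [fderiv_fun_neg, ← hf.2]; rfl⟩
lemma LD.mul (hf : LD f a z w) (hg : LD g b z w) :
    LD (fun y => f y * g y) (a * g z + f z * b) z w :=
  ⟨hf.1.mul hg.1, by
    rw [fderiv_fun_mul hf.1 hg.1, ← hf.2, ← hg.2]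
    simp only [add_apply, smul_apply, smul_eq_mul]; ring⟩
lemma LD.const (c : ℝ) : LD (fun _ => c) 0 z w := ⟨differentiableAt_const _, by simp⟩
end gen
variable {n : ℕ} {z w : ℝ × EuclideanSpace ℝ (Fin n)}
lemma LD.sum {f : Fin n → ℝ × EuclideanSpace ℝ (Fin n) → ℝ} {a : Fin n → ℝ}
    (hf : ∀ i, LD (f i) (a i) z w) : LD (fun y => ∑ i, f i y) (∑ i, a i) z w :=
  ⟨by have := fun i => (hf i).1; fun_prop, by
    rw [fderiv_fun_sum fun i _ => (hf i).1, sum_apply]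
    exact Finset.sum_congr rfl fun i _ => (hf i).2⟩
lemma LD.time : LD (fun y : ℝ × EuclideanSpace ℝ (Fin n) => y.1) w.1 z w := ⟨differentiableAt_fst, by simp [fderiv_fst]⟩
lemma LD.coord (j : Fin n) : LD (fun y : ℝ × EuclideanSpace ℝ (Fin n) => y.2 j) (w.2 j) z w := by
  let L : ℝ × EuclideanSpace ℝ (Fin n) →L[ℝ] ℝ :=
    (EuclideanSpace.proj j).comp (ContinuousLinearMap.snd ℝ ℝ _)
  have : LD (fun y => L y) (L w) z w := ⟨L.differentiableAt, by rw [L.fderiv]⟩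
  exact this
lemma LD.snd {χ : EuclideanSpace ℝ (Fin n) → ℝ} (h : ContDiff ℝ 1 χ) :
    LD (fun y => χ y.2) (fderiv ℝ χ z.2 w.2) z w := by
  have h1 : HasFDerivAt χ (fderiv ℝ χ z.2) z.2 := (h.differentiable one_ne_zero z.2).hasFDerivAt
  have h2 := h1.comp z (hasFDerivAt_snd (𝕜 := ℝ) (p := z))
  exact ⟨h2.differentiableAt, by
    have := h2.fderiv
    exact (congrArg (fun L => L w) this)⟩
end LD

lemma div_LD {n : ℕ} {T : ℝ} (hT : 0 < T) (G H G' : ℝ × EuclideanSpace ℝ (Fin n) → ℝ)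
    (F F' : Fin n → ℝ × EuclideanSpace ℝ (Fin n) → ℝ)
    (hG : ContDiffOn ℝ 1 G (KK n T)) (hF : ∀ i, ContDiffOn ℝ 1 (F i) (KK n T))
    (h0 : ∀ i, ∀ t ∈ Icc 0 T, ∀ x, ‖x‖ = 1 → F i (t, x) = 0)
    (hG' : ∀ z ∈ QQ n T, LD G (G' z) z (1, 0))
    (hF' : ∀ z ∈ QQ n T, ∀ i, LD (F i) (F' i z) z (0, EuclideanSpace.single i 1))
    (hH : ∀ z ∈ QQ n T, G' z + ∑ i, F' i z = H z) :
    (∫ x in ball 0 1, G (T, x)) - ∫ x in ball 0 1, G (0, x) = ∫ z in QQ n T, H z := by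
  refine div_main hT G H F hG hF h0 fun z hz => ?_
  rw [← hH z hz, (hG' z hz).2]
  congr 1
  exact Finset.sum_congr rfl fun i _ => (hF' z hz i).2

/-- A solution together with its time derivative `p` and its space derivatives `g i`. -/
structure Sol (n : ℕ) (T α : ℝ) (v p : ℝ × EuclideanSpace ℝ (Fin n) → ℝ)
    (g : Fin n → ℝ × EuclideanSpace ℝ (Fin n) → ℝ) : Prop where
  hv : ContDiffOn ℝ 1 v (KK n T)
  hp : ContDiffOn ℝ 1 p (KK n T)
  hg : ∀ i, ContDiffOn ℝ 1 (g i) (KK n T)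
  vt : ∀ z ∈ QQ n T, fderiv ℝ v z (1, 0) = p z
  vx : ∀ z ∈ QQ n T, ∀ i, fderiv ℝ v z (0, EuclideanSpace.single i 1) = g i z
  gt : ∀ z ∈ QQ n T, ∀ i, fderiv ℝ (g i) z (1, 0) = fderiv ℝ p z (0, EuclideanSpace.single i 1)
  gx : ∀ z ∈ QQ n T, ∀ i j, fderiv ℝ (g i) z (0, EuclideanSpace.single j 1) =
    fderiv ℝ (g j) z (0, EuclideanSpace.single i 1)
  wave : ∀ z ∈ QQ n T, fderiv ℝ p z (1, 0) = ∑ i, fderiv ℝ (g i) z (0, EuclideanSpace.single i 1)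
  v0 : ∀ t ∈ Icc 0 T, ∀ x, ‖x‖ = 1 → v (t, x) = 0
  p0 : ∀ t ∈ Icc 0 T, ∀ x, ‖x‖ = 1 → p (t, x) = 0
  sx : ∀ t ∈ Icc 0 T, ∀ x ∈ ball 0 1, ∀ i,
    fderiv ℝ (fun y => v (t, y)) x (EuclideanSpace.single i 1) = g i (t, x)
  vi : ∀ x, α ≤ ‖x‖ → ‖x‖ ≤ 1 → v (0, x) = 0
  gi : ∀ x, α < ‖x‖ → ‖x‖ < 1 → ∀ i, g i (0, x) = 0

section Sol
variable {n : ℕ} {T α : ℝ} {v p : ℝ × EuclideanSpace ℝ (Fin n) → ℝ}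
    {g : Fin n → ℝ × EuclideanSpace ℝ (Fin n) → ℝ}

lemma dAt {f : ℝ × EuclideanSpace ℝ (Fin n) → ℝ} (hf : ContDiffOn ℝ 1 f (KK n T)) {z} (hz : z ∈ QQ n T) :
    DifferentiableAt ℝ f z := (hf.differentiableOn one_ne_zero).differentiableAt (KK_nhds hz)

variable (s : Sol n T α v p g)
include s

lemma Sol.Lvt {z} (hz : z ∈ QQ n T) : LD v (p z) z (1, 0) := ⟨dAt s.hv hz, s.vt z hz⟩
lemma Sol.Lvx {z} (hz : z ∈ QQ n T) (i) : LD v (g i z) z (0, EuclideanSpace.single i 1) :=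
  ⟨dAt s.hv hz, s.vx z hz i⟩
lemma Sol.Lpt {z} (hz : z ∈ QQ n T) :
    LD p (∑ i, fderiv ℝ (g i) z (0, EuclideanSpace.single i 1)) z (1, 0) :=
  ⟨dAt s.hp hz, s.wave z hz⟩
lemma Sol.Lpx {z} (hz : z ∈ QQ n T) (i) :
    LD p (fderiv ℝ p z (0, EuclideanSpace.single i 1)) z (0, EuclideanSpace.single i 1) :=
  ⟨dAt s.hp hz, rfl⟩
lemma Sol.Lgt {z} (hz : z ∈ QQ n T) (i) :
    LD (g i) (fderiv ℝ p z (0, EuclideanSpace.single i 1)) z (1, 0) :=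
  ⟨dAt (s.hg i) hz, s.gt z hz i⟩
lemma Sol.Lgx {z} (hz : z ∈ QQ n T) (i j) :
    LD (g i) (fderiv ℝ (g i) z (0, EuclideanSpace.single j 1)) z (0, EuclideanSpace.single j 1) :=
  ⟨dAt (s.hg i) hz, rfl⟩

omit s in
lemma alg_E (P g h : Fin n → ℝ) (w p B : ℝ) (S : Finset (Fin n)) :
    w * (((∑ i ∈ S, h i) * p + p * ∑ i ∈ S, h i) + ∑ i ∈ S, (P i * g i + g i * P i)) +
      ∑ i ∈ S, (0 * (-2 * p * g i) + w * ((0 * p + -2 * P i) * g i + (-2 * p) * h i)) = 0 := by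
  induction S using Finset.induction_on with
  | empty => simp
  | insert a S ha ih =>
    simp only [Finset.sum_insert ha]
    linear_combination ih

omit s in
lemma alg_Y (g h q : Fin n → ℝ) (η u p : ℝ) (S : Finset (Fin n)) :
    η * η * (p * p + u * (∑ i ∈ S, h i)) +
      ∑ i ∈ S, -((q i * η + η * q i) * (u * g i) + η * η * (g i * g i + u * h i)) =
    η * η * (p * p) - η * η * (∑ i ∈ S, g i * g i) - 2 * η * u * ∑ i ∈ S, q i * g i := by
  induction S using Finset.induction_on with
  | empty => simp
  | insert a S ha ih =>
    simp only [Finset.sum_insert ha]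
    linear_combination ih

omit s in
lemma alg_X (x P g h q W V : Fin n → ℝ) (φ u p S Q c : ℝ) (I : Finset (Fin n)) :
    ∑ i ∈ I, -(q i * (x i * (1 / 2 * (p * p)) + g i * S - x i * (1 / 2 * Q) + c * (u * g i)) +
      φ * ((1 * (1 / 2 * (p * p)) + x i * (P i * p)) + (h i * S + g i * (g i + W i)) -
        (1 * (1 / 2 * Q) + x i * V i) + c * (g i * g i + u * h i))) =
    - (1 / 2 * (p * p) * (∑ i ∈ I, q i * x i) + S * (∑ i ∈ I, q i * g i)
      - 1 / 2 * Q * (∑ i ∈ I, q i * x i) + c * u * (∑ i ∈ I, q i * g i)) -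
    φ * ((I.card : ℝ) * (1 / 2 * (p * p)) + p * (∑ i ∈ I, x i * P i) + (∑ i ∈ I, h i) * S
      + (∑ i ∈ I, g i * g i) + (∑ i ∈ I, g i * W i) - (I.card : ℝ) * (1 / 2 * Q)
      - (∑ i ∈ I, x i * V i) + c * (∑ i ∈ I, g i * g i) + c * u * ∑ i ∈ I, h i) := by
  induction I using Finset.induction_on with
  | empty => simp
  | insert a I ha ih =>
    simp only [Finset.sum_insert ha, Finset.card_insert_of_notMem ha]
    push_cast
    linear_combination ih

lemma Sol.energy (hT : 0 < T) (A B : ℝ) :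
    (∫ x in ball 0 1, (A + B * T) * (p (T, x) * p (T, x) + ∑ i, g i (T, x) * g i (T, x))) -
      ∫ x in ball 0 1, (A + B * 0) * (p (0, x) * p (0, x) + ∑ i, g i (0, x) * g i (0, x)) =
    ∫ z in QQ n T, B * (p z * p z + ∑ i, g i z * g i z) := by
  have hv := s.hv; have hp := s.hp; have hg := s.hg
  refine div_LD hT (fun z => (A + B * z.1) * (p z * p z + ∑ i, g i z * g i z)) _ _
    (fun i z => (A + B * z.1) * (-2 * p z * g i z)) _ (by fun_prop) (by fun_prop) ?_
    (fun z hz => ((LD.const A).add ((LD.const B).mul LD.time)).mul (((s.Lpt hz).mul (s.Lpt hz)).add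
      (LD.sum fun i => (s.Lgt hz i).mul (s.Lgt hz i))))
    (fun z hz i => ((LD.const A).add ((LD.const B).mul LD.time)).mul
      (((LD.const (-2)).mul (s.Lpx hz i)).mul (s.Lgx hz i i))) ?_
  · intro i t ht x hx
    simp [s.p0 t ht x hx]
  · intro z hz
    have := alg_E (fun i => fderiv ℝ p z (0, EuclideanSpace.single i 1)) (fun i => g i z)
      (fun i => fderiv ℝ (g i) z (0, EuclideanSpace.single i 1)) (A + B * z.1) (p z) (B * 0) Finset.univ
    simp only [zero_mul, zero_add, mul_one, mul_zero] at this ⊢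
    linear_combination this

lemma Sol.Uid (hT : 0 < T) {ζ : EuclideanSpace ℝ (Fin n) → ℝ} (hζ : ContDiff ℝ 1 ζ) :
    (∫ x in ball 0 1, (T + 1 - T) * (ζ x * (v (T, x) * v (T, x)))) -
      ∫ x in ball 0 1, (T + 1 - 0) * (ζ x * (v (0, x) * v (0, x))) =
    ∫ z in QQ n T, (-(ζ z.2 * (v z * v z)) + 2 * (T + 1 - z.1) * (ζ z.2 * (v z * p z))) := by
  have hv := s.hv
  refine div_LD hT (fun z => (T + 1 - z.1) * (ζ z.2 * (v z * v z))) _ _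
    (fun i z => 0) (fun _ _ => 0) (by fun_prop) (by fun_prop) (by simp)
    (fun z hz => ((LD.const (T + 1)).sub LD.time).mul ((LD.snd hζ).mul ((s.Lvt hz).mul (s.Lvt hz))))
    (fun z hz i => LD.const 0) ?_
  intro z hz
  simp
  ring

lemma Sol.Yid (hT : 0 < T) {η : EuclideanSpace ℝ (Fin n) → ℝ} (hη : ContDiff ℝ 1 η) :
    (∫ x in ball 0 1, η x * η x * (v (T, x) * p (T, x))) -
      ∫ x in ball 0 1, η x * η x * (v (0, x) * p (0, x)) =
    ∫ z in QQ n T, (η z.2 * η z.2 * (p z * p z) - η z.2 * η z.2 * (∑ i, g i z * g i z) -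
      2 * η z.2 * v z * ∑ i, fderiv ℝ η z.2 (EuclideanSpace.single i 1) * g i z) := by
  have hv := s.hv; have hp := s.hp; have hg := s.hg
  refine div_LD hT (fun z => η z.2 * η z.2 * (v z * p z)) _ _
    (fun i z => -(η z.2 * η z.2 * (v z * g i z))) _ (by fun_prop) (by fun_prop) ?_
    (fun z hz => ((LD.snd hη).mul (LD.snd hη)).mul ((s.Lvt hz).mul (s.Lpt hz)))
    (fun z hz i => (((LD.snd hη).mul (LD.snd hη)).mul ((s.Lvx hz i).mul (s.Lgx hz i i))).neg) ?_
  · intro i t ht x hx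
    simp [s.v0 t ht x hx]
  · intro z hz
    have := alg_Y (fun i => g i z) (fun i => fderiv ℝ (g i) z (0, EuclideanSpace.single i 1))
      (fun i => fderiv ℝ η z.2 (EuclideanSpace.single i 1)) (η z.2) (v z) (p z) Finset.univ
    simp only [map_zero, zero_mul, zero_add, mul_zero] at this ⊢
    linear_combination this

lemma Sol.Xid (hT : 0 < T) {φ : EuclideanSpace ℝ (Fin n) → ℝ} (hφ : ContDiff ℝ 1 φ)
    (hφ0 : ∀ x, ‖x‖ = 1 → φ x = 0) (c : ℝ) (hc : c = ((n : ℝ) - 1) / 2) :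
    (∫ x in ball 0 1, p (T, x) * (φ x * (∑ j, x j * g j (T, x) + c * v (T, x)))) -
      ∫ x in ball 0 1, p (0, x) * (φ x * (∑ j, x j * g j (0, x) + c * v (0, x))) =
    ∫ z in QQ n T, (-(1 / 2) * φ z.2 * (p z * p z + ∑ i, g i z * g i z) +
      (1 / 2 * (∑ i, fderiv ℝ φ z.2 (EuclideanSpace.single i 1) * z.2 i) *
          ((∑ i, g i z * g i z) - p z * p z)
        - (∑ i, fderiv ℝ φ z.2 (EuclideanSpace.single i 1) * g i z) * (∑ j, z.2 j * g j z)
        - c * v z * (∑ i, fderiv ℝ φ z.2 (EuclideanSpace.single i 1) * g i z))) := by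
  have hv := s.hv; have hp := s.hp; have hg := s.hg
  refine div_LD hT (fun z => p z * (φ z.2 * (∑ j, z.2 j * g j z + c * v z))) _ _
    (fun i z => -(φ z.2 * (z.2 i * (1 / 2 * (p z * p z)) + g i z * (∑ j, z.2 j * g j z) -
      z.2 i * (1 / 2 * (∑ j, g j z * g j z)) + c * (v z * g i z))))
     _ (by fun_prop) (by fun_prop) ?_
    (fun z hz => (s.Lpt hz).mul ((LD.snd hφ).mul
      ((LD.sum fun j => (LD.coord j).mul (s.Lgt hz j)).add ((LD.const c).mul (s.Lvt hz)))))
    (fun z hz i => ((LD.snd hφ).mul ((((LD.coord i).mul ((LD.const (1 / 2)).mul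
        ((s.Lpx hz i).mul (s.Lpx hz i)))).add
      ((s.Lgx hz i i).mul (LD.sum fun j => (LD.coord j).mul (s.Lgx hz j i)))).sub
      ((LD.coord i).mul ((LD.const (1 / 2)).mul (LD.sum fun j => (s.Lgx hz j i).mul (s.Lgx hz j i))))
      |>.add ((LD.const c).mul ((s.Lvx hz i).mul (s.Lgx hz i i))))).neg) ?_
  · intro i t ht x hx
    simp [hφ0 x hx]
  · intro z hz
    have key := alg_X (fun i => z.2 i) (fun i => fderiv ℝ p z (0, EuclideanSpace.single i 1))
      (fun i => g i z) (fun i => fderiv ℝ (g i) z (0, EuclideanSpace.single i 1))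
      (fun i => fderiv ℝ φ z.2 (EuclideanSpace.single i 1))
      (fun i => ∑ j, z.2 j * fderiv ℝ (g j) z (0, EuclideanSpace.single i 1))
      (fun i => ∑ j, g j z * fderiv ℝ (g j) z (0, EuclideanSpace.single i 1))
      (φ z.2) (v z) (p z) (∑ j, z.2 j * g j z) (∑ j, g j z * g j z) c Finset.univ
    have hsym : ∑ i, g i z * ∑ j, z.2 j * fderiv ℝ (g j) z (0, EuclideanSpace.single i 1) =
        ∑ i, z.2 i * ∑ j, g j z * fderiv ℝ (g j) z (0, EuclideanSpace.single i 1) := by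
      simp only [Finset.mul_sum]
      rw [Finset.sum_comm]
      refine Finset.sum_congr rfl fun i _ => Finset.sum_congr rfl fun j _ => ?_
      rw [s.gx z hz i j]; ring
    have hd : ∀ i, ∑ j, ((EuclideanSpace.single i (1:ℝ)) j * g j z +
        z.2 j * fderiv ℝ (g j) z (0, EuclideanSpace.single i 1)) =
        g i z + ∑ j, z.2 j * fderiv ℝ (g j) z (0, EuclideanSpace.single i 1) := by
      intro i
      rw [Finset.sum_add_distrib]
      congr 1
      simp [Pi.single_apply]
    have hd1 : ∀ i : Fin n, (EuclideanSpace.single i (1:ℝ)) i = 1 := by intro i; simp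
    have hd2 : ∀ i, ∑ j, (fderiv ℝ (g j) z (0, EuclideanSpace.single i 1) * g j z +
        g j z * fderiv ℝ (g j) z (0, EuclideanSpace.single i 1)) =
        2 * ∑ j, g j z * fderiv ℝ (g j) z (0, EuclideanSpace.single i 1) := by
      intro i
      rw [Finset.mul_sum]
      exact Finset.sum_congr rfl fun j _ => by ring
    simp only [hd, hd1, hd2]
    have hcard : ((Finset.univ : Finset (Fin n)).card : ℝ) = 2 * c + 1 := by
      rw [hc]; simp; ring
    rw [hcard] at key
    simp only [map_zero, zero_mul, zero_add, mul_zero, PiLp.zero_apply]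
    have key2 := key
    rw [hsym] at key2
    have hcongr : ∀ f f' : Fin n → ℝ, (∀ i, f i = f' i) → ∑ i, f i = ∑ i, f' i :=
      fun f f' h => Finset.sum_congr rfl fun i _ => h i
    refine (congrArg (_ + ·) ((hcongr _ _ fun i => ?_).trans key2)).trans ?_
    · ring
    · ring

end Sol
end ObsBall

namespace ObsBall

open MeasureTheory Metric Set

lemma Q_lin {n : ℕ} {T : ℝ} {f g h : ℝ × EuclideanSpace ℝ (Fin n) → ℝ} (hf : ContinuousOn f (KK n T))
    (hg : ContinuousOn g (KK n T)) (hh : ContinuousOn h (KK n T)) (a b c : ℝ) :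
    ∫ z in QQ n T, (a * f z + b * g z + c * h z) =
      a * (∫ z in QQ n T, f z) + b * (∫ z in QQ n T, g z) + c * ∫ z in QQ n T, h z := by
  rw [integral_add, integral_add, integral_const_mul, integral_const_mul, integral_const_mul]
  all_goals exact intOn (by fun_prop)

lemma B_lin {n : ℕ} {f g h : EuclideanSpace ℝ (Fin n) → ℝ} (hf : ContinuousOn f (closedBall 0 1))
    (hg : ContinuousOn g (closedBall 0 1)) (hh : ContinuousOn h (closedBall 0 1)) (a b c : ℝ) :
    ∫ z in ball 0 1, (a * f z + b * g z + c * h z) =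
      a * (∫ z in ball 0 1, f z) + b * (∫ z in ball 0 1, g z) + c * ∫ z in ball 0 1, h z := by
  rw [integral_add, integral_add, integral_const_mul, integral_const_mul, integral_const_mul]
  all_goals exact intB (by fun_prop)

lemma Q_mono {n : ℕ} {T : ℝ} {f g : ℝ × EuclideanSpace ℝ (Fin n) → ℝ} (hf : ContinuousOn f (KK n T))
    (hg : ContinuousOn g (KK n T)) (h : ∀ z ∈ QQ n T, f z ≤ g z) :
    ∫ z in QQ n T, f z ≤ ∫ z in QQ n T, g z :=
  setIntegral_mono_on (intOn hf) (intOn hg) (isOpen_QQ n T).measurableSet h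

lemma B_mono {n : ℕ} {f g : EuclideanSpace ℝ (Fin n) → ℝ} (hf : ContinuousOn f (closedBall 0 1))
    (hg : ContinuousOn g (closedBall 0 1)) (h : ∀ z ∈ ball 0 1, f z ≤ g z) :
    ∫ z in ball 0 1, f z ≤ ∫ z in ball 0 1, g z :=
  setIntegral_mono_on (intB hf) (intB hg) measurableSet_ball h

/-- Cutoff functions. -/
structure Cut (n : ℕ) (r b N : ℝ) (φ η ζ : EuclideanSpace ℝ (Fin n) → ℝ) : Prop where
  hN : 0 ≤ N
  hφ : ContDiff ℝ 1 φ
  hη : ContDiff ℝ 1 η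
  hζ : ContDiff ℝ 1 ζ
  φ0 : ∀ x, 0 ≤ φ x
  φ1 : ∀ x, φ x ≤ 1
  φb : ∀ x, b ≤ ‖x‖ → φ x = 0
  φη : ∀ x, 1 - φ x ≤ η x * η x
  dφ : ∀ x, ∑ i, (fderiv ℝ φ x (EuclideanSpace.single i 1)) ^ 2 ≤ (N * (η x * η x)) ^ 2
  dη : ∀ x, ∑ i, (fderiv ℝ η x (EuclideanSpace.single i 1)) ^ 2 ≤ N ^ 2 * ζ x
  η0 : ∀ x, 0 ≤ η x
  η1 : ∀ x, η x ≤ 1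
  ηζ : ∀ x, η x * η x ≤ ζ x
  ζ0 : ∀ x, 0 ≤ ζ x
  ζ1 : ∀ x, ζ x ≤ 1
  ζr : ∀ x, ‖x‖ ≤ r → ζ x = 0

lemma exists_cut (n : ℕ) (r r1 a b : ℝ) (h0 : 0 < r) (h1 : r < r1) (h2 : r1 < a) (h3 : a < b) :
    ∃ N φ η ζ, Cut n r b N φ η ζ := by
  obtain ⟨ζ, zc, z0, z1, zl, zr, -, -⟩ := cutoff n r r1 h0 h1
  obtain ⟨η, ec, e0, e1, el, er, ed, N2, hN2, eN⟩ := cutoff n r1 a (h0.trans h1) h2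
  obtain ⟨χ, cc, c0, c1, cl, cr, cd, N3, hN3, cN⟩ := cutoff n a b (h0.trans (h1.trans h2)) h3
  have hd : ∀ x, fderiv ℝ (fun x => 1 - χ x) x = - fderiv ℝ χ x := fun x => by rw [fderiv_const_sub]
  refine ⟨N2 + N3, fun x => 1 - χ x, η, ζ, by positivity, contDiff_const.sub cc, ec, zc,
    fun x => sub_nonneg.2 (c1 x), fun x => by linarith [c0 x], fun x hx => by simp [cr x hx],
    fun x => ?_, fun x => ?_, fun x => ?_, e0, e1, fun x => ?_, z0, z1, zl⟩
  · rcases le_total ‖x‖ a with h | h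
    · simp [cl x h, mul_self_nonneg]
    · simp [er x h, c1 x]
  · rw [hd]
    rcases le_total ‖x‖ a with h | h
    · simp only [cd x h, neg_zero, zero_apply]
      simp
      positivity
    · simp only [neg_apply, neg_sq, er x h, mul_one]
      exact (cN x).trans (by gcongr; linarith)
  · rcases le_total ‖x‖ r1 with h | h
    · simp only [ed x h, zero_apply]
      simp
      have := z0 x
      positivity
    · rw [zr x h, mul_one]
      exact (eN x).trans (by gcongr; linarith)
  · rcases le_total ‖x‖ r1 with h | h
    · rw [el x h]; simpa using z0 x
    · rw [zr x h]; nlinarith [e0 x, e1 x]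

lemma cs {n : ℕ} (a b : Fin n → ℝ) : (∑ i, a i * b i) ^ 2 ≤ (∑ i, a i ^ 2) * ∑ i, b i ^ 2 :=
  Finset.sum_mul_sq_le_sq_mul_sq _ _ _

lemma norm_sum {n : ℕ} (x : EuclideanSpace ℝ (Fin n)) : ∑ i, x i ^ 2 = ‖x‖ ^ 2 := by
  rw [EuclideanSpace.norm_sq_eq]; simp

lemma sumsq {n : ℕ} (a : Fin n → ℝ) : ∑ i, a i * a i = ∑ i, a i ^ 2 :=
  Finset.sum_congr rfl fun i _ => by ring

section
variable {n : ℕ} {T α r b N : ℝ} {v p : ℝ × EuclideanSpace ℝ (Fin n) → ℝ}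
    {g : Fin n → ℝ × EuclideanSpace ℝ (Fin n) → ℝ} {φ η ζ : EuclideanSpace ℝ (Fin n) → ℝ}

lemma Cut.s_le (k : Cut n r b N φ η ζ) {x : EuclideanSpace ℝ (Fin n)} (hx : ‖x‖ ≤ 1) :
    |∑ i, fderiv ℝ φ x (EuclideanSpace.single i 1) * x i| ≤ N * (η x * η x) := by
  have hN := k.hN
  have h := cs (fun i => fderiv ℝ φ x (EuclideanSpace.single i 1)) (fun i => x i)
  rw [norm_sum] at h
  apply abs_le_of_sq_le_sq _ (mul_nonneg hN (mul_self_nonneg _))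
  refine h.trans ?_
  have h2 : ‖x‖ ^ 2 ≤ 1 := by nlinarith [norm_nonneg x]
  calc _ ≤ (N * (η x * η x)) ^ 2 * 1 := by
        gcongr
        exact k.dφ x
    _ = _ := mul_one _

lemma Mid (s : Sol n T α v p g) (hφ : ContDiff ℝ 1 φ) (hφ0 : ∀ x, ‖x‖ = 1 → φ x = 0)
    {t : ℝ} (ht : t ∈ Icc 0 T) :
    ∫ x in ball 0 1, ((2 * φ x * (v (t, x) * v (t, x)) *
        ∑ i, fderiv ℝ φ x (EuclideanSpace.single i 1) * x i) +
      n * (φ x * φ x * (v (t, x) * v (t, x))) + 2 * (φ x * φ x * v (t, x)) * ∑ i, x i * g i (t, x)) = 0 := by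
  have hv := slice_contDiff s.hv ht
  have hsx := s.sx t ht
  obtain ⟨w, hw⟩ : ∃ w : EuclideanSpace ℝ (Fin n) → ℝ, ∀ x, v (t, x) = w x := ⟨_, fun _ => rfl⟩
  simp only [hw] at *
  have hF : ∀ i : Fin n, ContDiffOn ℝ 1 (fun x => φ x * φ x * (w x * w x) * x i)
      (closedBall (0 : EuclideanSpace ℝ (Fin n)) 1) := fun i => by fun_prop
  have h := fun i : Fin n => space_div _ (hF i) (fun x hx => by simp [hφ0 x hx]) (EuclideanSpace.single i 1)
  have hu : UniqueDiffOn ℝ (closedBall (0 : EuclideanSpace ℝ (Fin n)) 1) :=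
    uniqueDiffOn_convex (convex_closedBall _ _)
      ⟨0, ball_subset_interior_closedBall (mem_ball_self one_pos)⟩
  have hi : ∀ i : Fin n, IntegrableOn (fun x => fderiv ℝ (fun x => φ x * φ x * (w x * w x) * x i) x
      (EuclideanSpace.single i 1)) (ball 0 1) := by
    intro i
    have := intB (((hF i).continuousOn_fderivWithin hu le_rfl).clm_apply
      (continuousOn_const (c := EuclideanSpace.single i (1:ℝ))))
    refine this.congr_fun (fun x hx => ?_) measurableSet_ball
    simp only
    rw [fderivWithin_of_mem_nhds (closedBall_mem_nhds_of_mem hx)]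
  have h2 : ∑ i : Fin n, ∫ x in ball (0 : EuclideanSpace ℝ (Fin n)) 1,
      fderiv ℝ (fun x => φ x * φ x * (w x * w x) * x i) x (EuclideanSpace.single i 1) = 0 :=
    Finset.sum_eq_zero fun i _ => h i
  rw [← integral_finsetSum _ fun i _ => hi i] at h2
  rw [← h2]
  refine setIntegral_congr_fun measurableSet_ball fun x hx => ?_
  have hLv : ∀ i, LD (w) (g i (t, x)) x (EuclideanSpace.single i 1) := fun i =>
    ⟨(hv.differentiableOn one_ne_zero).differentiableAt (closedBall_mem_nhds_of_mem hx), hsx x hx i⟩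
  have hLφ : ∀ i : Fin n, LD φ (fderiv ℝ φ x (EuclideanSpace.single i 1)) x (EuclideanSpace.single i 1) :=
    fun i => ⟨hφ.differentiable one_ne_zero x, rfl⟩
  have hLx : ∀ i : Fin n, LD (fun y : EuclideanSpace ℝ (Fin n) => y i) 1 x (EuclideanSpace.single i 1) := by
    intro i
    have : LD (fun y : EuclideanSpace ℝ (Fin n) => EuclideanSpace.proj (𝕜 := ℝ) i y)
      (EuclideanSpace.proj (𝕜 := ℝ) i (EuclideanSpace.single i (1:ℝ))) x (EuclideanSpace.single i 1) :=
      ⟨(EuclideanSpace.proj (𝕜 := ℝ) i).differentiableAt, by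
        rw [(EuclideanSpace.proj (𝕜 := ℝ) i).fderiv]⟩
    simpa using this
  have hfd := fun i => ((((hLφ i).mul (hLφ i)).mul ((hLv i).mul (hLv i))).mul (hLx i)).2
  simp only [hfd]
  have alg : ∀ (q G X : Fin n → ℝ) (f u : ℝ) (I : Finset (Fin n)),
      2 * f * (u * u) * (∑ i ∈ I, q i * X i) + (I.card : ℝ) * (f * f * (u * u)) +
        2 * (f * f * u) * (∑ i ∈ I, X i * G i) =
      ∑ i ∈ I, (((q i * f + f * q i) * (u * u) + f * f * (G i * u + u * G i)) * X i + f * f * (u * u) * 1) := by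
    intro q G X f u I
    induction I using Finset.induction_on with
    | empty => simp
    | insert a I ha ih =>
      simp only [Finset.sum_insert ha, Finset.card_insert_of_notMem ha]
      push_cast
      linear_combination ih
  have := alg (fun i => fderiv ℝ φ x (EuclideanSpace.single i 1)) (fun i => g i (t, x)) (fun i => x i)
    (φ x) (w x) Finset.univ
  simpa using this

lemma Mbound (s : Sol n T α v p g) (k : Cut n r b N φ η ζ) (hb : b ≤ 1) {t : ℝ} (ht : t ∈ Icc 0 T)
    (c : ℝ) (hc0 : 0 ≤ c) (hc : c ≤ n) (ρ : ℝ) (hρ : 0 < ρ)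
    (hS : ∀ x ∈ ball 0 1, (φ x * ∑ i, x i * g i (t, x)) ^ 2 ≤ ρ ^ 2 * ∑ i, g i (t, x) * g i (t, x)) :
    |∫ x in ball 0 1, p (t, x) * (φ x * (∑ j, x j * g j (t, x) + c * v (t, x)))| ≤
      ρ / 2 * (∫ x in ball 0 1, (p (t, x) * p (t, x) + ∑ i, g i (t, x) * g i (t, x))) +
      c * N / ρ * ∫ x in ball 0 1, ζ x * (v (t, x) * v (t, x)) := by
  have hv := (slice_contDiff s.hv ht).continuousOn
  have hp := (slice_contDiff s.hp ht).continuousOn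
  have hg := fun i => (slice_contDiff (s.hg i) ht).continuousOn
  have hφ := k.hφ.continuous
  have hζ := k.hζ.continuous
  have hdφ := k.hφ.continuous_fderiv one_ne_zero
  have hmid := Mid s k.hφ (fun x hx => k.φb x (hx ▸ hb)) ht
  obtain ⟨w, hw⟩ : ∃ w : EuclideanSpace ℝ (Fin n) → ℝ, ∀ x, v (t, x) = w x := ⟨_, fun _ => rfl⟩
  obtain ⟨P, hP⟩ : ∃ w : EuclideanSpace ℝ (Fin n) → ℝ, ∀ x, p (t, x) = w x := ⟨_, fun _ => rfl⟩
  obtain ⟨G, hG⟩ : ∃ w : Fin n → EuclideanSpace ℝ (Fin n) → ℝ, ∀ i x, g i (t, x) = w i x :=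
    ⟨_, fun _ _ => rfl⟩
  simp only [hw, hP, hG] at *
  have hD : ContinuousOn (fun x => ((2 * φ x * (w x * w x) *
        ∑ i, fderiv ℝ φ x (EuclideanSpace.single i 1) * x i) +
      n * (φ x * φ x * (w x * w x)) + 2 * (φ x * φ x * w x) * ∑ i, x i * G i x))
      (closedBall (0 : EuclideanSpace ℝ (Fin n)) 1) := by fun_prop
  have h1 := B_lin (f := fun x => P x * P x + ∑ i, G i x * G i x)
    (g := fun x => ζ x * (w x * w x)) (h := fun x => _) (by fun_prop) (by fun_prop) hD
    (ρ / 2) (c * N / ρ) (c / (2 * ρ))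
  rw [hmid, mul_zero, add_zero] at h1
  rw [← h1]
  refine abs_integral_le_integral_abs.trans ?_
  refine B_mono (by fun_prop) (by fun_prop) fun x hx => ?_
  have hx1 : ‖x‖ ≤ 1 := by simpa using (ball_subset_closedBall hx)
  have hs := k.s_le hx1
  have hS := hS x hx
  have hN := k.hN
  set A := ∑ i, fderiv ℝ φ x (EuclideanSpace.single i 1) * x i
  set S := ∑ i, x i * G i x
  set Q := ∑ i, G i x * G i x
  have h0 := k.φ0 x; have h01 := k.φ1 x; have hηζ := k.ηζ x
  generalize w x = u at *
  generalize P x = P at *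
  generalize φ x = f at *
  generalize ζ x = z at *
  have hA : -A ≤ N * z := (neg_le_abs A).trans (hs.trans (by gcongr))
  have hz : 0 ≤ z := (mul_self_nonneg _).trans hηζ
  have e1 : |P * (f * (S + c * u))| ≤ ρ / 2 * (P * P) + 1 / (2 * ρ) * (f * (S + c * u)) ^ 2 := by
    rw [abs_le]
    have e : ∀ y : ℝ, ρ / 2 * (P * P) + 1 / (2 * ρ) * y ^ 2 - P * y = 1 / (2 * ρ) * (ρ * P - y) ^ 2 := by
      intro y; field_simp; ring
    have e' : ∀ y : ℝ, ρ / 2 * (P * P) + 1 / (2 * ρ) * y ^ 2 + P * y = 1 / (2 * ρ) * (ρ * P + y) ^ 2 := by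
      intro y; field_simp; ring
    have a1 := e (f * (S + c * u)); have a2 := e' (f * (S + c * u))
    have b1 : 0 ≤ 1 / (2 * ρ) * (ρ * P - f * (S + c * u)) ^ 2 := by positivity
    have b2 : 0 ≤ 1 / (2 * ρ) * (ρ * P + f * (S + c * u)) ^ 2 := by positivity
    constructor <;> linarith
  refine e1.trans ?_
  have e2 : (f * (S + c * u)) ^ 2 ≤ ρ ^ 2 * Q + 2 * c * N * (z * (u * u)) +
      c * (2 * f * (u * u) * A + n * (f * f * (u * u)) + 2 * (f * f * u) * S) := by
    have c1 : -(f * A) ≤ N * z := by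
      have : 0 ≤ N * z := by positivity
      nlinarith
    have c2 : -(f * A) * (2 * c * (u * u)) ≤ N * z * (2 * c * (u * u)) :=
      mul_le_mul_of_nonneg_right c1 (mul_nonneg (mul_nonneg zero_le_two hc0) (mul_self_nonneg u))
    have c3 : c * c * (f * f * (u * u)) ≤ c * n * (f * f * (u * u)) :=
      mul_le_mul_of_nonneg_right (mul_le_mul_of_nonneg_left hc hc0)
        (mul_nonneg (mul_nonneg h0 h0) (mul_self_nonneg u))
    nlinarith
  calc _ ≤ ρ / 2 * (P * P) + 1 / (2 * ρ) * (ρ ^ 2 * Q + 2 * c * N * (z * (u * u)) +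
      c * (2 * f * (u * u) * A + n * (f * f * (u * u)) + 2 * (f * f * u) * S)) := by gcongr
    _ = _ := by field_simp; ring

end
end ObsBall

namespace ObsBall

open MeasureTheory Metric Set

lemma le_of_sq_le_sq_aux {a b : ℝ} (h : a ^ 2 ≤ b ^ 2) (hb : 0 ≤ b) : a ≤ b :=
  (abs_le_of_sq_le_sq' h hb).2

section
variable {n : ℕ} {T α r b N : ℝ} {v p : ℝ × EuclideanSpace ℝ (Fin n) → ℝ}
    {g : Fin n → ℝ × EuclideanSpace ℝ (Fin n) → ℝ} {φ η ζ : EuclideanSpace ℝ (Fin n) → ℝ}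

lemma energy_T (s : Sol n T α v p g) (hT : 0 < T) :
    (∫ x in ball 0 1, (p (T, x) * p (T, x) + ∑ i, g i (T, x) * g i (T, x))) =
      ∫ x in ball 0 1, (p (0, x) * p (0, x) + ∑ i, g i (0, x) * g i (0, x)) := by
  have h := s.energy hT 1 0
  simp only [zero_mul, mul_zero, add_zero, one_mul, integral_zero] at h
  linarith

lemma energy_Q (s : Sol n T α v p g) (hT : 0 < T) :
    (∫ z in QQ n T, (p z * p z + ∑ i, g i z * g i z)) =
      T * ∫ x in ball 0 1, (p (0, x) * p (0, x) + ∑ i, g i (0, x) * g i (0, x)) := by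
  have h := s.energy hT T (-1)
  simp only [neg_mul, one_mul, add_neg_cancel, zero_mul, integral_zero, neg_zero, mul_zero, add_zero,
    integral_neg, integral_const_mul] at h
  linarith

lemma U_bound (s : Sol n T α v p g) (k : Cut n r b N φ η ζ) (hT : 0 < T) (hαr : α ≤ r) :
    (∫ x in ball 0 1, ζ x * (v (T, x) * v (T, x))) + 1 / 2 * (∫ z in QQ n T, ζ z.2 * (v z * v z)) ≤
      2 * (T + 1) ^ 2 * ∫ z in QQ n T, ζ z.2 * (p z * p z) := by
  have hv := s.hv.continuousOn; have hp := s.hp.continuousOn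
  have hζ := k.hζ.continuous
  have h := s.Uid hT k.hζ
  have h0 : ∫ x in ball 0 1, (T + 1 - 0) * (ζ x * (v (0, x) * v (0, x))) = 0 := by
    rw [setIntegral_congr_fun (g := fun _ => 0) measurableSet_ball, integral_zero]
    intro x hx
    have hx1 : ‖x‖ ≤ 1 := by simpa using (ball_subset_closedBall hx)
    rcases le_total ‖x‖ r with h | h
    · simp [k.ζr x h]
    · simp [s.vi x (hαr.trans h) hx1]
  rw [h0, sub_zero] at h
  have h1 : ∀ y : ℝ, (T + 1 - T) * y = y := fun y => by ring
  simp only [h1] at h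
  have hm := Q_mono (f := fun z => (-(ζ z.2 * (v z * v z)) + 2 * (T + 1 - z.1) * (ζ z.2 * (v z * p z))))
    (g := fun z => (-(1 / 2)) * (ζ z.2 * (v z * v z)) + 2 * (T + 1) ^ 2 * (ζ z.2 * (p z * p z)) + 0 * 0)
    (T := T) (n := n) (by fun_prop) (by fun_prop) (by
      intro z hz
      have hz0 := k.ζ0 z.2
      have ht0 : 0 < z.1 := hz.1.1
      have ht1 : z.1 < T := hz.1.2
      have e1 : 2 * (T + 1 - z.1) * (v z * p z) ≤ 1 / 2 * (v z * v z) + 2 * (T + 1) ^ 2 * (p z * p z) := by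
        have : (T + 1 - z.1) ^ 2 ≤ (T + 1) ^ 2 := by gcongr <;> linarith
        have e2 : (T + 1 - z.1) ^ 2 * (p z * p z) ≤ (T + 1) ^ 2 * (p z * p z) :=
          mul_le_mul_of_nonneg_right this (mul_self_nonneg _)
        nlinarith [sq_nonneg (v z - 2 * (T + 1 - z.1) * p z)]
      have e3 := mul_le_mul_of_nonneg_left e1 hz0
      linarith)
  rw [Q_lin (f := fun z => ζ z.2 * (v z * v z)) (g := fun z => ζ z.2 * (p z * p z)) (h := fun _ => 0)
    (by fun_prop) (by fun_prop) (by fun_prop)] at hm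
  linarith

lemma Y_bound (s : Sol n T α v p g) (k : Cut n r b N φ η ζ) (hT : 0 < T) (hαr : α ≤ r)
    (δ : ℝ) (hδ : 0 < δ) :
    1 / 2 * (∫ z in QQ n T, η z.2 * η z.2 * ∑ i, g i z * g i z) ≤
      (∫ z in QQ n T, ζ z.2 * (p z * p z)) + 2 * N ^ 2 * (∫ z in QQ n T, ζ z.2 * (v z * v z)) +
      δ * (∫ x in ball 0 1, (p (T, x) * p (T, x) + ∑ i, g i (T, x) * g i (T, x))) +
      1 / (4 * δ) * ∫ x in ball 0 1, ζ x * (v (T, x) * v (T, x)) := by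
  have hv := s.hv.continuousOn; have hp := s.hp.continuousOn
  have hg := fun i => (s.hg i).continuousOn
  have hζ := k.hζ.continuous
  have hη := k.hη.continuous
  have hdη := k.hη.continuous_fderiv one_ne_zero
  have h := s.Yid hT k.hη
  have h0 : ∫ x in ball 0 1, η x * η x * (v (0, x) * p (0, x)) = 0 := by
    rw [setIntegral_congr_fun (g := fun _ => 0) measurableSet_ball, integral_zero]
    intro x hx
    have hx1 : ‖x‖ ≤ 1 := by simpa using (ball_subset_closedBall hx)
    rcases le_total ‖x‖ r with h | h
    · have h1 := k.ηζ x
      rw [k.ζr x h] at h1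
      have h2 : η x * η x = 0 := le_antisymm h1 (mul_self_nonneg _)
      simp only [h2, zero_mul]
    · simp [s.vi x (hαr.trans h) hx1]
  rw [h0, sub_zero] at h
  have hm := Q_mono (f := fun z => (η z.2 * η z.2 * (p z * p z) - η z.2 * η z.2 * (∑ i, g i z * g i z) -
      2 * η z.2 * v z * ∑ i, fderiv ℝ η z.2 (EuclideanSpace.single i 1) * g i z))
    (g := fun z => 1 * (ζ z.2 * (p z * p z)) + (-(1 / 2)) * (η z.2 * η z.2 * ∑ i, g i z * g i z) +
      2 * N ^ 2 * (ζ z.2 * (v z * v z)))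
    (T := T) (n := n) (by fun_prop) (by fun_prop) (by
      intro z hz
      have e1 := cs (fun i => fderiv ℝ η z.2 (EuclideanSpace.single i 1)) (fun i => g i z)
      have e2 := k.dη z.2
      have e3 := k.ηζ z.2
      simp only [sumsq]
      have hQ : 0 ≤ ∑ i, g i z ^ 2 := Finset.sum_nonneg fun i _ => sq_nonneg _
      generalize ∑ i, g i z ^ 2 = Q at *
      generalize ∑ i, (fderiv ℝ η z.2 (EuclideanSpace.single i 1)) ^ 2 = D at *
      generalize ∑ i, fderiv ℝ η z.2 (EuclideanSpace.single i 1) * g i z = A at *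
      have hz0 := k.ζ0 z.2
      have f1 : η z.2 * η z.2 * (p z * p z) ≤ ζ z.2 * (p z * p z) :=
        mul_le_mul_of_nonneg_right e3 (mul_self_nonneg _)
      have e4 : A ^ 2 ≤ N ^ 2 * ζ z.2 * Q := e1.trans (mul_le_mul_of_nonneg_right e2 hQ)
      have f2 : -(2 * η z.2 * v z * A) ≤ 1 / 2 * (η z.2 * η z.2 * Q) + 2 * N ^ 2 * (ζ z.2 * (v z * v z)) := by
        apply le_of_sq_le_sq_aux _ (by
          have := mul_nonneg (mul_self_nonneg (η z.2)) hQ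
          have := mul_nonneg hz0 (mul_self_nonneg (v z))
          positivity)
        have g1 : (η z.2 * v z) ^ 2 * A ^ 2 ≤ (η z.2 * v z) ^ 2 * (N ^ 2 * ζ z.2 * Q) :=
          mul_le_mul_of_nonneg_left e4 (sq_nonneg _)
        nlinarith [sq_nonneg (1 / 2 * (η z.2 * η z.2 * Q) - 2 * N ^ 2 * (ζ z.2 * (v z * v z)))]
      linarith)
  rw [Q_lin (f := fun z => ζ z.2 * (p z * p z)) (g := fun z => η z.2 * η z.2 * ∑ i, g i z * g i z)
    (h := fun z => ζ z.2 * (v z * v z)) (by fun_prop) (by fun_prop) (by fun_prop)] at hm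
  have hTI : T ∈ Icc 0 T := right_mem_Icc.2 hT.le
  have hv' := slice_cont hv hTI
  have hp' := slice_cont hp hTI
  have hg' := fun i => slice_cont (hg i) hTI
  have hm2 : ∫ x in ball 0 1, (-(δ) * (p (T, x) * p (T, x) + ∑ i, g i (T, x) * g i (T, x)) +
      (-(1 / (4 * δ))) * (ζ x * (v (T, x) * v (T, x))) + 0 * 0) ≤
      ∫ x in ball 0 1, η x * η x * (v (T, x) * p (T, x)) := by
    obtain ⟨w, hw⟩ : ∃ w : EuclideanSpace ℝ (Fin n) → ℝ, ∀ x, v (T, x) = w x := ⟨_, fun _ => rfl⟩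
    obtain ⟨P, hP⟩ : ∃ w : EuclideanSpace ℝ (Fin n) → ℝ, ∀ x, p (T, x) = w x := ⟨_, fun _ => rfl⟩
    obtain ⟨G, hG⟩ : ∃ w : Fin n → EuclideanSpace ℝ (Fin n) → ℝ, ∀ i x, g i (T, x) = w i x :=
      ⟨_, fun _ _ => rfl⟩
    simp only [hw, hP, hG] at *
    refine B_mono (by fun_prop) (by fun_prop) fun x hx => ?_
    have hQ : 0 ≤ ∑ i, G i x * G i x := Finset.sum_nonneg fun i _ => mul_self_nonneg _
    have e3 := k.ηζ x
    have e0 := k.η0 x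
    have e1 := k.η1 x
    have e4 : (η x * η x) ^ 2 ≤ ζ x := by
      have : η x * η x ≤ 1 := by nlinarith
      nlinarith [mul_self_nonneg (η x)]
    have e5 : δ * (P x * P x) + 1 / (4 * δ) * (η x * η x * w x) ^ 2 + η x * η x * (w x * P x) =
        1 / (4 * δ) * (2 * δ * P x + η x * η x * w x) ^ 2 := by field_simp; ring
    have e6 : 0 ≤ 1 / (4 * δ) * (2 * δ * P x + η x * η x * w x) ^ 2 := by positivity
    have e7 : 1 / (4 * δ) * (η x * η x * w x) ^ 2 ≤ 1 / (4 * δ) * (ζ x * (w x * w x)) := by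
      have := mul_le_mul_of_nonneg_right e4 (mul_self_nonneg (w x))
      gcongr
      nlinarith
    have e8 : 0 ≤ δ * ∑ i, G i x * G i x := by positivity
    nlinarith
  have hE : ContinuousOn (fun x => p (T, x) * p (T, x) + ∑ i, g i (T, x) * g i (T, x)) (closedBall 0 1) :=
    (hp'.mul hp').add (continuousOn_finsetSum _ fun i _ => (hg' i).mul (hg' i))
  rw [B_lin (f := fun x => p (T, x) * p (T, x) + ∑ i, g i (T, x) * g i (T, x))
    (g := fun x => ζ x * (v (T, x) * v (T, x))) (h := fun _ => 0)
    hE (hζ.continuousOn.mul (hv'.mul hv')) continuousOn_const] at hm2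
  linarith

lemma X_bound (s : Sol n T α v p g) (k : Cut n r b N φ η ζ) (hT : 0 < T) (hb : b ≤ 1)
    (c : ℝ) (hc : c = ((n : ℝ) - 1) / 2) (hc0 : 0 ≤ c) :
    (∫ x in ball 0 1, p (T, x) * (φ x * (∑ j, x j * g j (T, x) + c * v (T, x)))) -
      (∫ x in ball 0 1, p (0, x) * (φ x * (∑ j, x j * g j (0, x) + c * v (0, x)))) ≤
    -(1 / 2) * (∫ z in QQ n T, (p z * p z + ∑ i, g i z * g i z)) +
    (1 / 2 + 2 * N + c * N) * ((∫ z in QQ n T, ζ z.2 * (p z * p z)) +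
      (∫ z in QQ n T, η z.2 * η z.2 * ∑ i, g i z * g i z) + (∫ z in QQ n T, ζ z.2 * (v z * v z))) := by
  have hv := s.hv.continuousOn; have hp := s.hp.continuousOn
  have hg := fun i => (s.hg i).continuousOn
  have hζ := k.hζ.continuous
  have hη := k.hη.continuous
  have hφ := k.hφ.continuous
  have hdφ := k.hφ.continuous_fderiv one_ne_zero
  rw [s.Xid hT k.hφ (fun x hx => k.φb x (hx ▸ hb)) c hc]
  set C := 1 / 2 + 2 * N + c * N with hC
  have e : ∀ E O W V : ℝ, -(1 / 2) * E + C * (O + W + V) = -(1 / 2) * E + C * (1 * O + 1 * W + 1 * V) + 0 * 0 := by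
    intros; ring
  rw [e, ← Q_lin (f := fun z => ζ z.2 * (p z * p z)) (g := fun z => η z.2 * η z.2 * ∑ i, g i z * g i z)
    (h := fun z => ζ z.2 * (v z * v z)) (by fun_prop) (by fun_prop) (by fun_prop)]
  have e0 : (0:ℝ) * 0 = 0 * ∫ z in QQ n T, (0:ℝ) := by simp
  rw [e0, ← Q_lin (by fun_prop) (by fun_prop) (by fun_prop)]
  refine Q_mono (by fun_prop) (by fun_prop) fun z hz => ?_
  have hx1 : ‖z.2‖ ≤ 1 := by simpa using (ball_subset_closedBall hz.2)
  have hs := k.s_le hx1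
  have e1 := cs (fun i => fderiv ℝ φ z.2 (EuclideanSpace.single i 1)) (fun i => g i z)
  have e2 := cs (fun i => z.2 i) (fun i => g i z)
  have e3 := k.dφ z.2
  rw [norm_sum] at e2
  simp only [sumsq]
  have hQ : 0 ≤ ∑ i, g i z ^ 2 := Finset.sum_nonneg fun i _ => sq_nonneg _
  generalize ∑ i, g i z ^ 2 = Q at *
  generalize ∑ i, (fderiv ℝ φ z.2 (EuclideanSpace.single i 1)) ^ 2 = D at *
  generalize ∑ i, fderiv ℝ φ z.2 (EuclideanSpace.single i 1) * g i z = A at *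
  generalize ∑ i, fderiv ℝ φ z.2 (EuclideanSpace.single i 1) * z.2 i = B at *
  generalize ∑ i, z.2 i * g i z = S at *
  have hN := k.hN
  have hηζ := k.ηζ z.2
  have hφη := k.φη z.2
  have hη0 := mul_self_nonneg (η z.2)
  generalize η z.2 * η z.2 = h at *
  generalize ζ z.2 = y at *
  generalize φ z.2 = f at *
  generalize v z = u at *
  generalize p z = P at *
  have hS : S ^ 2 ≤ Q := e2.trans (by
    have : ‖z.2‖ ^ 2 ≤ 1 := by nlinarith [norm_nonneg z.2]
    nlinarith)
  have hA : A ^ 2 ≤ (N * h) ^ 2 * Q := e1.trans (mul_le_mul_of_nonneg_right e3 hQ)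
  have hP := mul_self_nonneg P
  have hu := mul_self_nonneg u
  have hNh : 0 ≤ N * h := mul_nonneg hN hη0
  -- the four terms
  have t1 : 1 / 2 * B * (Q - P * P) ≤ 1 / 2 * (N * h) * (Q + P * P) := by
    rw [abs_le] at hs
    nlinarith
  have t2 : -(A * S) ≤ N * h * Q := by
    apply le_of_sq_le_sq_aux _ (by positivity)
    calc (-(A * S)) ^ 2 = A ^ 2 * S ^ 2 := by ring
      _ ≤ ((N * h) ^ 2 * Q) * Q := by gcongr
      _ = _ := by ring
  have t3 : -(u * A) ≤ N * h * ((Q + u * u) / 2) := by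
    apply le_of_sq_le_sq_aux _ (by positivity)
    calc (-(u * A)) ^ 2 = (u * u) * A ^ 2 := by ring
      _ ≤ (u * u) * ((N * h) ^ 2 * Q) := by gcongr
      _ = (N * h) ^ 2 * (Q * (u * u)) := by ring
      _ ≤ (N * h) ^ 2 * ((Q + u * u) / 2) ^ 2 := by
        gcongr
        nlinarith [sq_nonneg (Q - u * u)]
      _ = _ := by ring
  have t4 : (1 - f) * (P * P + Q) ≤ h * (P * P + Q) :=
    mul_le_mul_of_nonneg_right hφη (by positivity)
  have t5 := mul_le_mul_of_nonneg_left t3 hc0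
  have t6 : h * (P * P) ≤ y * (P * P) := mul_le_mul_of_nonneg_right hηζ hP
  have t7 : h * (u * u) ≤ y * (u * u) := mul_le_mul_of_nonneg_right hηζ hu
  have hC0 : 0 ≤ C := by positivity
  have t8 : C * (h * (P * P) + h * Q + h * (u * u)) ≤ C * (1 * (y * (P * P)) + 1 * (h * Q) + 1 * (y * (u * u))) :=
    mul_le_mul_of_nonneg_left (by linarith) hC0
  have q1 : 0 ≤ h * Q := by positivity
  have q2 : 0 ≤ h * (P * P) := by positivity
  have q3 : 0 ≤ h * (u * u) := by positivity
  have q4 := mul_nonneg hN q1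
  have q5 := mul_nonneg hN q2
  have q6 := mul_nonneg hN q3
  have q7 := mul_nonneg hc0 q4
  have q8 := mul_nonneg hc0 q5
  have q9 := mul_nonneg hc0 q6
  have t9 : -(1 / 2) * f * (P * P + Q) + (1 / 2 * B * (Q - P * P) - A * S - c * u * A) ≤
      -(1 / 2) * (P * P + Q) + C * (h * (P * P) + h * Q + h * (u * u)) := by
    rw [hC]
    linarith
  linarith

end
end ObsBall

namespace ObsBall
open MeasureTheory Metric Set

lemma main_est {n : ℕ} (hn : 1 ≤ n) {T α r b N : ℝ} {φ η ζ : EuclideanSpace ℝ (Fin n) → ℝ}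
    (k : Cut n r b N φ η ζ) (hα : 0 < α) (hαr : α ≤ r) (hb : b ≤ 1) (hb0 : 0 < b) (hT : α + b < T) :
    ∃ C : ℝ, 0 < C ∧ ∀ (v p : ℝ × EuclideanSpace ℝ (Fin n) → ℝ)
      (g : Fin n → ℝ × EuclideanSpace ℝ (Fin n) → ℝ), Sol n T α v p g →
      (∫ x in ball 0 1, (p (0, x) * p (0, x) + ∑ i, g i (0, x) * g i (0, x))) ≤
        C * ∫ z in QQ n T, ζ z.2 * (p z * p z) := by
  have hT0 : 0 < T := by linarith
  have hN := k.hN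
  obtain ⟨c, hc⟩ : ∃ c, c = ((n : ℝ) - 1) / 2 := ⟨_, rfl⟩
  have hn1 : (1 : ℝ) ≤ n := by exact_mod_cast hn
  have hc0 : 0 ≤ c := by rw [hc]; linarith
  have hcn : c ≤ n := by rw [hc]; linarith
  obtain ⟨C1, hC1⟩ : ∃ C1, C1 = 1 / 2 + 2 * N + c * N := ⟨_, rfl⟩
  have hC10 : 0 ≤ C1 := by rw [hC1]; positivity
  obtain ⟨d, hd⟩ : ∃ d, d = T - α - b := ⟨_, rfl⟩
  have hd0 : 0 < d := by rw [hd]; linarith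
  obtain ⟨δ, hδ⟩ : ∃ δ, δ = d / (8 * (C1 + 1)) := ⟨_, rfl⟩
  have hδ0 : 0 < δ := by rw [hδ]; positivity
  have hδ1 : C1 * (2 * δ) ≤ d / 4 := by
    have : δ * (8 * (C1 + 1)) = d := by rw [hδ]; field_simp
    nlinarith
  obtain ⟨k0, hk0⟩ : ∃ k0, k0 = 2 * (T + 1) ^ 2 := ⟨_, rfl⟩
  have hk00 : 0 ≤ k0 := by rw [hk0]; positivity
  refine ⟨4 / d * (c * N / b * k0 + C1 * (3 + 2 * k0 + 4 * N ^ 2 * (2 * k0) +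
    2 * (1 / (4 * δ)) * k0)) + 1, by positivity, fun v p g s => ?_⟩
  have hO0 : 0 ≤ ∫ z in QQ n T, ζ z.2 * (p z * p z) :=
    integral_nonneg fun z => mul_nonneg (k.ζ0 _) (mul_self_nonneg _)
  have hV0 : 0 ≤ ∫ z in QQ n T, ζ z.2 * (v z * v z) :=
    integral_nonneg fun z => mul_nonneg (k.ζ0 _) (mul_self_nonneg _)
  have hU0 : 0 ≤ ∫ x in ball 0 1, ζ x * (v (T, x) * v (T, x)) :=
    integral_nonneg fun z => mul_nonneg (k.ζ0 _) (mul_self_nonneg _)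
  have hE0 : 0 ≤ ∫ x in ball 0 1, (p (0, x) * p (0, x) + ∑ i, g i (0, x) * g i (0, x)) :=
    integral_nonneg fun z => add_nonneg (mul_self_nonneg _)
      (Finset.sum_nonneg fun i _ => mul_self_nonneg _)
  have hU := U_bound s k hT0 hαr
  have hY := Y_bound s k hT0 hαr δ hδ0
  have hX := X_bound s k hT0 hb c hc hc0
  have hφ2 : ∀ x, φ x ^ 2 ≤ 1 := fun x => by
    have := k.φ0 x; have := k.φ1 x; nlinarith
  have hcs : ∀ (t : ℝ) (x : EuclideanSpace ℝ (Fin n)) (ρ : ℝ), ‖x‖ ≤ ρ →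
      (φ x * ∑ i, x i * g i (t, x)) ^ 2 ≤ ρ ^ 2 * ∑ i, g i (t, x) * g i (t, x) := by
    intro t x ρ hx
    have h1 := cs (fun i => x i) (fun i => g i (t, x))
    rw [norm_sum, ← sumsq] at h1
    have hQ : 0 ≤ ∑ i, g i (t, x) * g i (t, x) := Finset.sum_nonneg fun i _ => mul_self_nonneg _
    have h2 : ‖x‖ ^ 2 ≤ ρ ^ 2 := by gcongr
    have h3 := mul_le_mul_of_nonneg_right h2 hQ
    rw [mul_pow]
    have h4 := mul_le_mul_of_nonneg_right (hφ2 x) (sq_nonneg (∑ i, x i * g i (t, x)))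
    linarith
  have hM0 := Mbound s k hb (t := 0) ⟨le_rfl, hT0.le⟩ c hc0 hcn α hα (by
    intro x hx
    rcases le_or_gt ‖x‖ α with h | h
    · exact hcs 0 x α h
    · have := s.gi x h (by simpa using hx)
      simp [this])
  have hMT := Mbound s k hb (t := T) ⟨hT0.le, le_rfl⟩ c hc0 hcn b hb0 (by
    intro x hx
    rcases le_or_gt ‖x‖ b with h | h
    · exact hcs T x b h
    · rw [k.φb x h.le]
      have hQ : 0 ≤ ∑ i, g i (T, x) * g i (T, x) := Finset.sum_nonneg fun i _ => mul_self_nonneg _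
      rw [zero_mul, zero_pow two_ne_zero]; positivity)
  have h0 : ∫ x in ball 0 1, ζ x * (v (0, x) * v (0, x)) = 0 := by
    rw [setIntegral_congr_fun (g := fun _ => 0) measurableSet_ball, integral_zero]
    intro x hx
    have hx1 : ‖x‖ ≤ 1 := by simpa using (ball_subset_closedBall hx)
    rcases le_total ‖x‖ r with h | h
    · simp [k.ζr x h]
    · simp [s.vi x (hαr.trans h) hx1]
  rw [h0, mul_zero, add_zero] at hM0
  rw [energy_T s hT0] at hMT hY
  rw [energy_Q s hT0, ← hC1] at hX
  rw [← hk0] at hU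
  have hM0' := (abs_le.1 hM0).2
  have hMT' := (abs_le.1 hMT).1
  generalize (∫ x in ball 0 1, (p (0, x) * p (0, x) + ∑ i, g i (0, x) * g i (0, x))) = E at *
  generalize (∫ x in ball 0 1, p (T, x) * (φ x * (∑ j, x j * g j (T, x) + c * v (T, x)))) = XT at *
  generalize (∫ x in ball 0 1, p (0, x) * (φ x * (∑ j, x j * g j (0, x) + c * v (0, x)))) = X0 at *
  generalize (∫ z in QQ n T, ζ z.2 * (p z * p z)) = O at *
  generalize (∫ z in QQ n T, ζ z.2 * (v z * v z)) = V at *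
  generalize (∫ x in ball 0 1, ζ x * (v (T, x) * v (T, x))) = U at *
  generalize (∫ z in QQ n T, η z.2 * η z.2 * ∑ i, g i z * g i z) = W at *
  have hU' : U ≤ k0 * O := by linarith
  have hV' : V ≤ 2 * k0 * O := by linarith
  have hW : W ≤ 2 * O + 4 * N ^ 2 * V + 2 * δ * E + 2 * (1 / (4 * δ)) * U := by linarith
  have e1 : C1 * (O + W + V) ≤
      C1 * (3 * O + 2 * k0 * O + 4 * N ^ 2 * (2 * k0 * O) + 2 * δ * E + 2 * (1 / (4 * δ)) * (k0 * O)) := by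
    refine mul_le_mul_of_nonneg_left ?_ hC10
    have a1 : 4 * N ^ 2 * V ≤ 4 * N ^ 2 * (2 * k0 * O) := by gcongr
    have a2 : 2 * (1 / (4 * δ)) * U ≤ 2 * (1 / (4 * δ)) * (k0 * O) := by gcongr
    linarith
  have e2 : c * N / b * U ≤ c * N / b * (k0 * O) := by gcongr
  have e3 : C1 * (2 * δ) * E ≤ d / 4 * E := by gcongr
  have e4 : d / 4 * E ≤ (c * N / b * k0 + C1 * (3 + 2 * k0 + 4 * N ^ 2 * (2 * k0) +
    2 * (1 / (4 * δ)) * k0)) * O := by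
    have : d * E = T * E - α * E - b * E := by rw [hd]; ring
    linarith
  generalize (c * N / b * k0 + C1 * (3 + 2 * k0 + 4 * N ^ 2 * (2 * k0) +
    2 * (1 / (4 * δ)) * k0)) = M at *
  have e5 : E ≤ 4 / d * M * O := by
    calc E = 4 / d * (d / 4 * E) := by field_simp
      _ ≤ 4 / d * (M * O) := by gcongr
      _ = _ := by ring
  linarith

end ObsBall

namespace ObsBall
open MeasureTheory Metric Set

lemma mk_sol {n : ℕ} {T α : ℝ} (hT : 0 < T) {u : ℝ → EuclideanSpace ℝ (Fin n) → ℝ}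
    (hu : ContDiffOn ℝ 2 (Function.uncurry u) (KK n T))
    (hw : ∀ t ∈ Icc (0 : ℝ) T, ∀ x ∈ closedBall (0 : EuclideanSpace ℝ (Fin n)) 1,
          pdt (pdt u) t x = lap (u t) x)
    (hd : ∀ t ∈ Icc (0 : ℝ) T, ∀ x : EuclideanSpace ℝ (Fin n), ‖x‖ = 1 → u t x = 0)
    (hi : ∀ x : EuclideanSpace ℝ (Fin n), α ≤ ‖x‖ → ‖x‖ ≤ 1 → u 0 x = 0) :
    Sol n T α (Function.uncurry u)
      (fun z => fderivWithin ℝ (Function.uncurry u) (KK n T) z (1, 0))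
      (fun i z => fderivWithin ℝ (Function.uncurry u) (KK n T) z (0, EuclideanSpace.single i 1)) := by
  have hK := KK_unique n T hT
  have h1 : ContDiffOn ℝ 1 (Function.uncurry u) (KK n T) := hu.of_le (by norm_num)
  have hD : ContDiffOn ℝ 1 (fderivWithin ℝ (Function.uncurry u) (KK n T)) (KK n T) :=
    hu.fderivWithin hK (by norm_num)
  have heq : ∀ z ∈ QQ n T, fderivWithin ℝ (Function.uncurry u) (KK n T) z =
      fderiv ℝ (Function.uncurry u) z := fun z hz => fderivWithin_of_mem_nhds (KK_nhds hz)
  have heq' : ∀ z ∈ QQ n T, ∀ w, (fun z => fderivWithin ℝ (Function.uncurry u) (KK n T) z w) =ᶠ[nhds z]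
      fun z => fderiv ℝ (Function.uncurry u) z w := fun z hz w => by
    filter_upwards [(isOpen_QQ n T).mem_nhds hz] with y hy
    rw [heq y hy]
  have hAt : ∀ z ∈ QQ n T, ContDiffAt ℝ 2 (Function.uncurry u) z := fun z hz =>
    hu.contDiffAt (KK_nhds hz)
  have hDd : ∀ z ∈ QQ n T, DifferentiableAt ℝ (fderiv ℝ (Function.uncurry u)) z := fun z hz =>
    ((hAt z hz).fderiv_right (m := 1) (by norm_num)).differentiableAt one_ne_zero
  have hD2 : ∀ z ∈ QQ n T, ∀ w w', fderiv ℝ (fun z => fderivWithin ℝ (Function.uncurry u) (KK n T) z w) z w' =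
      fderiv ℝ (fderiv ℝ (Function.uncurry u)) z w' w := fun z hz w w' => by
    rw [(heq' z hz w).fderiv_eq, fderiv_clm_apply (hDd z hz) (differentiableAt_const w)]
    simp
  have hsym : ∀ z ∈ QQ n T, ∀ w w', fderiv ℝ (fderiv ℝ (Function.uncurry u)) z w w' =
      fderiv ℝ (fderiv ℝ (Function.uncurry u)) z w' w := fun z hz w w' =>
    ((hAt z hz).isSymmSndFDerivAt (by simp)) w w'
  have hp : ∀ w, ContDiffOn ℝ 1 (fun z => fderivWithin ℝ (Function.uncurry u) (KK n T) z w) (KK n T) :=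
    fun w => hD.clm_apply contDiffOn_const
  have hsx : ∀ t ∈ Icc 0 T, ∀ x ∈ ball (0 : EuclideanSpace ℝ (Fin n)) 1, ∀ w,
    fderiv ℝ (u t) x w = fderivWithin ℝ (Function.uncurry u) (KK n T) (t, x) (0, w) := by
    intro t ht x hx w
    have := (slice_deriv h1 ht hx).fderiv
    simp only [Function.uncurry_apply_pair] at this
    rw [show u t = fun y => u t y from rfl, this]
    simp
  have hpt : ∀ t ∈ Ioo 0 T, ∀ x ∈ closedBall (0 : EuclideanSpace ℝ (Fin n)) 1,
      pdt u t x = fderivWithin ℝ (Function.uncurry u) (KK n T) (t, x) (1, 0) := by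
    intro t ht x hx
    have := (slice_time h1 (Ioo_subset_Icc_self ht) hx).hasDerivAt (Icc_mem_nhds ht.1 ht.2)
    exact this.deriv
  refine ⟨h1, hp _, fun i => hp _, fun z hz => ?_, fun z hz i => ?_, fun z hz i => ?_,
    fun z hz i j => ?_, fun z hz => ?_, fun t ht x hx => hd t ht x hx, fun t ht x hx => ?_, 
    fun t ht x hx i => hsx t ht x hx _, fun x h h' => hi x h h', fun x h h' i => ?_⟩
  · simp only [heq z hz]
  · simp only [heq z hz]
  · rw [hD2 z hz, hD2 z hz, hsym z hz]
  · rw [hD2 z hz, hD2 z hz, hsym z hz]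
  · obtain ⟨t, x⟩ := z
    have hxb : x ∈ ball (0 : EuclideanSpace ℝ (Fin n)) 1 := hz.2
    have htI : t ∈ Ioo 0 T := hz.1
    have h := hw t (Ioo_subset_Icc_self htI) x (ball_subset_closedBall hxb)
    have hl : pdt (pdt u) t x =
        fderiv ℝ (fun z => fderivWithin ℝ (Function.uncurry u) (KK n T) z (1, 0)) (t, x) (1, 0) := by
      have a := (slice_time (hp (1, 0)) (Ioo_subset_Icc_self htI) (ball_subset_closedBall hxb)).hasDerivAt
        (Icc_mem_nhds htI.1 htI.2)
      rw [fderivWithin_of_mem_nhds (KK_nhds hz)] at a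
      rw [← a.deriv]
      show deriv (fun s => pdt u s x) t = _
      apply Filter.EventuallyEq.deriv_eq
      filter_upwards [Ioo_mem_nhds htI.1 htI.2] with s hs
      exact hpt s hs x (ball_subset_closedBall hxb)
    rw [← hl, h, lap]
    refine Finset.sum_congr rfl fun i _ => ?_
    rw [iteratedFDeriv_two_apply]
    simp only [Matrix.cons_val_zero, Matrix.cons_val_one]
    have a := slice_deriv (hp (0, EuclideanSpace.single i 1)) (Ioo_subset_Icc_self htI) hxb
    rw [fderivWithin_of_mem_nhds (KK_nhds hz)] at a
    have b : fderiv ℝ (fun y => fderiv ℝ (u t) y (EuclideanSpace.single i 1)) x (EuclideanSpace.single i 1) =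
      fderiv ℝ (fun z => fderivWithin ℝ (Function.uncurry u) (KK n T) z (0, EuclideanSpace.single i 1)) (t, x)
        (0, EuclideanSpace.single i 1) := by
      have e : (fun y => fderiv ℝ (u t) y (EuclideanSpace.single i 1)) =ᶠ[nhds x]
        fun y => fderivWithin ℝ (Function.uncurry u) (KK n T) (t, y) (0, EuclideanSpace.single i 1) := by
        filter_upwards [isOpen_ball.mem_nhds hxb] with y hy
        exact hsx t (Ioo_subset_Icc_self htI) y hy _
      rw [e.fderiv_eq, a.fderiv]
      simp
    rw [← b]
    have hc : ContDiffAt ℝ 2 (u t) x := by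
      have : ContDiffAt ℝ 2 (Function.uncurry u ∘ fun y => (t, y)) x :=
        (hAt (t, x) hz).comp x (by fun_prop)
      exact this
    have hdd : DifferentiableAt ℝ (fderiv ℝ (u t)) x :=
      (hc.fderiv_right (m := 1) (by norm_num)).differentiableAt one_ne_zero
    rw [fderiv_clm_apply hdd (differentiableAt_const _)]
    simp
  · have a := slice_time h1 ht (x := x) (by simp [hx])
    have b : HasDerivWithinAt (fun s => Function.uncurry u (s, x)) 0 (Icc 0 T) t :=
      (hasDerivWithinAt_const t (Icc 0 T) (0 : ℝ)).congr (fun s hs => hd s hs x hx) (hd t ht x hx)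
    exact (uniqueDiffOn_Icc hT t ht).eq_deriv _ a b
  · have hxb : x ∈ ball (0 : EuclideanSpace ℝ (Fin n)) 1 := by simpa using h'
    rw [← hsx 0 ⟨le_rfl, hT.le⟩ x hxb]
    have e : u 0 =ᶠ[nhds x] fun _ => 0 := by
      have o : IsOpen {y : EuclideanSpace ℝ (Fin n) | α < ‖y‖ ∧ ‖y‖ < 1} :=
        (isOpen_lt continuous_const continuous_norm).inter (isOpen_lt continuous_norm continuous_const)
      filter_upwards [o.mem_nhds ⟨h, h'⟩] with y hy
      exact hi y hy.1.le hy.2.le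
    rw [e.fderiv_eq]; simp

end ObsBall

namespace ObsBall
open MeasureTheory Metric Set

lemma rhs_cmp {n : ℕ} {T ε N b : ℝ} (hT : 0 < T) (hε : ε < 1) {φ η ζ : EuclideanSpace ℝ (Fin n) → ℝ}
    (k : Cut n (1 - ε) b N φ η ζ) {u : ℝ → EuclideanSpace ℝ (Fin n) → ℝ}
    (hu : ContDiffOn ℝ 2 (Function.uncurry u) (KK n T)) {p : ℝ × EuclideanSpace ℝ (Fin n) → ℝ}
    (hp : ContinuousOn p (KK n T))
    (hpe : p = fun z => fderivWithin ℝ (Function.uncurry u) (KK n T) z (1, 0)) :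
    ∫ z in QQ n T, ζ z.2 * (p z * p z) ≤ ∫ t in Ioo (0 : ℝ) T,
      ∫ x in {x : EuclideanSpace ℝ (Fin n) | 1 - ε < ‖x‖ ∧ ‖x‖ < 1}, (pdt u t x) ^ 2 := by
  have h1 : ContDiffOn ℝ 1 (Function.uncurry u) (KK n T) := hu.of_le (by norm_num)
  set A := {x : EuclideanSpace ℝ (Fin n) | 1 - ε < ‖x‖ ∧ ‖x‖ < 1} with hA
  have hAm : MeasurableSet A :=
    ((isOpen_lt continuous_const continuous_norm).inter
      (isOpen_lt continuous_norm continuous_const)).measurableSet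
  have hAQ : Ioo 0 T ×ˢ A ⊆ QQ n T := fun z hz => ⟨hz.1, by simpa using hz.2.2⟩
  have hpp : ContinuousOn (fun z => p z * p z) (KK n T) := hp.mul hp
  have hζ : ContinuousOn (fun z : ℝ × EuclideanSpace ℝ (Fin n) => ζ z.2 * (p z * p z)) (KK n T) :=
    (k.hζ.continuous.comp continuous_snd).continuousOn.mul hpp
  have e1 : ∫ t in Ioo (0 : ℝ) T, ∫ x in A, (pdt u t x) ^ 2 = ∫ z in Ioo 0 T ×ˢ A, p z * p z := by
    have hi : IntegrableOn (fun z => p z * p z) (Ioo 0 T ×ˢ A) := (intOn hpp).mono_set hAQ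
    rw [Measure.volume_eq_prod] at hi ⊢
    rw [setIntegral_prod _ hi]
    refine setIntegral_congr_fun measurableSet_Ioo fun t ht => ?_
    refine setIntegral_congr_fun hAm fun x hx => ?_
    have hxb : x ∈ closedBall (0 : EuclideanSpace ℝ (Fin n)) 1 := by simpa using hx.2.le
    have := (slice_time h1 (Ioo_subset_Icc_self ht) hxb).hasDerivAt (Icc_mem_nhds ht.1 ht.2)
    have h2 : pdt u t x = p (t, x) := by rw [hpe]; exact this.deriv
    simp only [h2]; ring
  rw [e1]
  have e2 : ∫ z in QQ n T, ζ z.2 * (p z * p z) = ∫ z in Ioo 0 T ×ˢ A, ζ z.2 * (p z * p z) := by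
    refine setIntegral_eq_of_subset_of_forall_diff_eq_zero (isOpen_QQ n T).measurableSet hAQ ?_
    intro z hz
    have hzb : ‖z.2‖ < 1 := by simpa using hz.1.2
    have : ‖z.2‖ ≤ 1 - ε := by
      by_contra hc
      exact hz.2 ⟨hz.1.1, ⟨not_le.1 hc, hzb⟩⟩
    rw [k.ζr _ this, zero_mul]
  rw [e2]
  refine setIntegral_mono_on ((intOn hζ).mono_set hAQ) ((intOn hpp).mono_set hAQ)
    (measurableSet_Ioo.prod hAm) fun z _ => ?_
  have := k.ζ1 z.2
  nlinarith [mul_self_nonneg (p z)]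

lemma lhs_cmp {n : ℕ} {T : ℝ} (hT : 0 < T) {u : ℝ → EuclideanSpace ℝ (Fin n) → ℝ}
    (hu : ContDiffOn ℝ 2 (Function.uncurry u) (KK n T)) {p : ℝ × EuclideanSpace ℝ (Fin n) → ℝ}
    {g : Fin n → ℝ × EuclideanSpace ℝ (Fin n) → ℝ}
    (hp : ContinuousOn p (KK n T)) (hg : ∀ i, ContinuousOn (g i) (KK n T))
    (hpe : p = fun z => fderivWithin ℝ (Function.uncurry u) (KK n T) z (1, 0))
    (hge : ∀ x ∈ ball 0 1, ∀ i, fderiv ℝ (u 0) x (EuclideanSpace.single i 1) = g i (0, x)) :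
    ∫ x in ball (0 : EuclideanSpace ℝ (Fin n)) 1, (‖gradient (u 0) x‖ ^ 2 + (pdt u 0 x) ^ 2) ≤
      ∫ x in ball 0 1, (p (0, x) * p (0, x) + ∑ i, g i (0, x) * g i (0, x)) := by
  have h1 : ContDiffOn ℝ 1 (Function.uncurry u) (KK n T) := hu.of_le (by norm_num)
  have h0 : (0 : ℝ) ∈ Icc 0 T := ⟨le_rfl, hT.le⟩
  refine integral_mono_of_nonneg (Filter.Eventually.of_forall fun x => ?_) ?_ ?_
  · simp only [Pi.zero_apply]; positivity
  · refine intB (f := fun x => p (0, x) * p (0, x) + ∑ i, g i (0, x) * g i (0, x)) ?_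
    have a := slice_cont hp h0
    have b := fun i => slice_cont (hg i) h0
    exact (a.mul a).add (continuousOn_finset_sum _ fun i _ => (b i).mul (b i))
  · refine (ae_restrict_iff' measurableSet_ball).2 (Filter.Eventually.of_forall fun x hx => ?_)
    have e1 : ‖gradient (u 0) x‖ ^ 2 = ∑ i, g i (0, x) * g i (0, x) := by
      rw [← norm_sum]
      refine Finset.sum_congr rfl fun i _ => ?_
      have : gradient (u 0) x i = g i (0, x) := by
        rw [← hge x hx i]
        have h := InnerProductSpace.toDual_symm_apply (𝕜 := ℝ) (x := EuclideanSpace.single i (1 : ℝ))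
          (y := fderiv ℝ (u 0) x)
        rw [← h, EuclideanSpace.inner_single_right]
        simp [gradient]
      rw [this]; ring
    have e2 : (pdt u 0 x) ^ 2 ≤ p (0, x) * p (0, x) := by
      by_cases hdd : DifferentiableAt ℝ (fun s => u s x) 0
      · have a := slice_time h1 h0 (ball_subset_closedBall hx)
        have b : HasDerivWithinAt (fun s => Function.uncurry u (s, x)) (pdt u 0 x) (Icc 0 T) 0 :=
          hdd.hasDerivAt.hasDerivWithinAt
        have := (uniqueDiffOn_Icc hT 0 h0).eq_deriv _ a b
        rw [hpe]
        simp only [this]; exact (sq _).le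
      · have : pdt u 0 x = 0 := deriv_zero_of_not_differentiableAt hdd
        rw [this]; nlinarith [mul_self_nonneg (p (0, x))]
    simp only [e1]; linarith

end ObsBall

theorem observability_ball_localized (n : ℕ) (hn : 1 ≤ n) (ε α T : ℝ)
    (hε0 : 0 < ε) (hε1 : ε < 1) (hα0 : 0 < α) (hα : α < 1 - ε) (hT : 1 + α - ε < T) :
    ∃ C : ℝ, 0 < C ∧
      ∀ u : ℝ → EuclideanSpace ℝ (Fin n) → ℝ,
        -- u is of class C² on [0,T] × closure(Ω)
        ContDiffOn ℝ 2 (Function.uncurry u)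
          (Set.Icc 0 T ×ˢ Metric.closedBall (0 : EuclideanSpace ℝ (Fin n)) 1) →
        -- u solves the wave equation on [0,T] × closure(Ω)
        (∀ t ∈ Set.Icc (0 : ℝ) T, ∀ x ∈ Metric.closedBall (0 : EuclideanSpace ℝ (Fin n)) 1,
          pdt (pdt u) t x = lap (u t) x) →
        -- Dirichlet boundary conditions
        (∀ t ∈ Set.Icc (0 : ℝ) T, ∀ x : EuclideanSpace ℝ (Fin n), ‖x‖ = 1 → u t x = 0) →
        -- initial data supported in the closed ball of radius α
        (∀ x : EuclideanSpace ℝ (Fin n), α ≤ ‖x‖ → ‖x‖ ≤ 1 → u 0 x = 0 ∧ pdt u 0 x = 0) →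
        -- observability inequality with observation in the annulus
        ∫ x in Metric.ball (0 : EuclideanSpace ℝ (Fin n)) 1,
            (‖gradient (u 0) x‖ ^ 2 + (pdt u 0 x) ^ 2) ≤
          C * ∫ t in Set.Ioo (0 : ℝ) T,
                ∫ x in {x : EuclideanSpace ℝ (Fin n) | 1 - ε < ‖x‖ ∧ ‖x‖ < 1},
                  (pdt u t x) ^ 2 := by
  have hT0 : 0 < T := by linarith
  obtain ⟨b, hb1, hb2⟩ : ∃ b, 1 - ε < b ∧ b < min 1 (T - α) :=
    exists_between (lt_min (by linarith) (by linarith))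
  obtain ⟨a, ha1, ha2⟩ := exists_between hb1
  obtain ⟨r1, hr1, hr2⟩ := exists_between ha1
  have hb3 : b < 1 := hb2.trans_le (min_le_left _ _)
  have hb4 : b < T - α := hb2.trans_le (min_le_right _ _)
  obtain ⟨N, φ, η, ζ, k⟩ := ObsBall.exists_cut n (1 - ε) r1 a b (by linarith) hr1 hr2 ha2
  obtain ⟨C, hC, h⟩ := ObsBall.main_est hn (T := T) k hα0 hα.le hb3.le (by linarith) (by linarith)
  refine ⟨C, hC, fun u hu hw hd hi => ?_⟩
  have s := ObsBall.mk_sol (α := α) hT0 hu hw hd (fun x h h' => (hi x h h').1)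
  have hl := ObsBall.lhs_cmp hT0 hu s.hp.continuousOn (fun i => (s.hg i).continuousOn) rfl
    (fun x hx i => s.sx 0 ⟨le_rfl, hT0.le⟩ x hx i)
  have hr := ObsBall.rhs_cmp hT0 hε1 k hu s.hp.continuousOn rfl
  exact hl.trans ((h _ _ _ s).trans (mul_le_mul_of_nonneg_left hr hC.le))
end

section
/- Let Ω ⊂ ℝⁿ be a bounded connected open set with C^∞ boundary and let ω ⊆ Ω be a nonempty open subset. Let A = (a_{ij}) be an n×n matrix of real-valued C^∞ functions on ℝⁿ that is symmetric (a_{ij} = a_{ji}) and uniformly positive definite on a neighborhood of closure(Ω), and let Δ_A u = ∑_{i,j=1}^n ∂_{x_j}( a_{ij} ∂_{x_i} u ). Let λ ∈ ℂ and let u be a complex-valued function smooth on a neighborhood of closure(Ω) such that Δ_A u = λ² u on Ω, u = 0 on ∂Ω, and λ·u(x) = 0 for every x ∈ ω. Then u vanishes identically on Ω. -/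
open MeasureTheory

/-- The partial derivative ∂_{x_i} of a complex-valued function on ℝⁿ. -/
noncomputable def pd (n : ℕ) (i : Fin n) (f : EuclideanSpace ℝ (Fin n) → ℂ)
    (x : EuclideanSpace ℝ (Fin n)) : ℂ :=
  fderiv ℝ f x (EuclideanSpace.single i 1)

/-- The divergence-form elliptic operator Δ_A u = ∑_{i,j} ∂_{x_j}(a_{ij} ∂_{x_i} u). -/
noncomputable def lapA (n : ℕ) (a : Fin n → Fin n → EuclideanSpace ℝ (Fin n) → ℝ)
    (u : EuclideanSpace ℝ (Fin n) → ℂ) (x : EuclideanSpace ℝ (Fin n)) : ℂ :=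
  ∑ j, pd n j (fun y => ∑ i, (a i j y : ℂ) * pd n i u y) x

/-- A set has C^∞ boundary if near every boundary point it is the sublevel set of
a smooth function with nonvanishing differential. -/
def SmoothBoundary {n : ℕ} (Ω : Set (EuclideanSpace ℝ (Fin n))) : Prop :=
  ∀ x ∈ frontier Ω, ∃ (U : Set (EuclideanSpace ℝ (Fin n)))
      (f : EuclideanSpace ℝ (Fin n) → ℝ),
    IsOpen U ∧ x ∈ U ∧ ContDiff ℝ (⊤ : ℕ∞) f ∧ (∀ y ∈ U, fderiv ℝ f y ≠ 0) ∧
      Ω ∩ U = {y ∈ U | f y < 0}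


abbrev EE (n : ℕ) := EuclideanSpace ℝ (Fin n)

noncomputable def DD {n : ℕ} (i : Fin n) (f : EE n → ℝ) (x : EE n) : ℝ :=
  fderiv ℝ f x (EuclideanSpace.single i 1)

abbrev Sm {n : ℕ} (f : EE n → ℝ) : Prop := ContDiff ℝ (⊤ : ℕ∞) f

section basics
variable {n : ℕ} {i j : Fin n} {f g : EE n → ℝ} {x : EE n}

theorem Sm.diff (hf : Sm f) : Differentiable ℝ f := hf.differentiable (by simp)

theorem Sm.DD (hf : Sm f) (i : Fin n) : Sm (DD i f) := by
  have h : ContDiff ℝ (⊤ : ℕ∞) (fderiv ℝ f) := hf.fderiv_right (by simp)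
  exact h.clm_apply contDiff_const

theorem Sm.sum {ι : Type*} {s : Finset ι} {f : ι → EE n → ℝ} (h : ∀ i, Sm (f i)) :
    Sm (fun x => ∑ i ∈ s, f i x) := ContDiff.sum (fun i _ => h i)

theorem DD_add (hf : Sm f) (hg : Sm g) : DD i (fun y => f y + g y) x = DD i f x + DD i g x := by
  unfold DD
  rw [fderiv_fun_add (hf.diff x) (hg.diff x)]; rfl

theorem DD_sub (hf : Sm f) (hg : Sm g) : DD i (fun y => f y - g y) x = DD i f x - DD i g x := by
  unfold DD
  rw [fderiv_fun_sub (hf.diff x) (hg.diff x)]; rfl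

theorem DD_mul (hf : Sm f) (hg : Sm g) :
    DD i (fun y => f y * g y) x = DD i f x * g x + f x * DD i g x := by
  unfold DD
  rw [fderiv_fun_mul (hf.diff x) (hg.diff x)]
  simp; ring

theorem DD_cmul (c : ℝ) (hf : Sm f) :
    DD i (fun y => c * f y) x = c * DD i f x := by
  unfold DD
  rw [fderiv_const_mul (hf.diff x)]
  simp

theorem DD_sum {ι : Type*} {s : Finset ι} {f : ι → EE n → ℝ} (h : ∀ i, Sm (f i)) :
    DD i (fun y => ∑ k ∈ s, f k y) x = ∑ k ∈ s, DD i (f k) x := by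
  unfold DD
  rw [fderiv_fun_sum (fun k _ => (h k).diff x)]
  simp

theorem DD_exp (hf : Sm f) :
    DD i (fun y => Real.exp (f y)) x = Real.exp (f x) * DD i f x := by
  unfold DD
  rw [fderiv_exp (hf.diff x)]
  simp

theorem DD_comm (hf : Sm f) : DD i (DD j f) x = DD j (DD i f) x := by
  have h : ContDiff ℝ (⊤ : ℕ∞) (fderiv ℝ f) := hf.fderiv_right (by simp)
  have hd : Differentiable ℝ (fderiv ℝ f) := h.differentiable (by simp)
  have key : ∀ k l : Fin n, DD k (DD l f) x =
      fderiv ℝ (fderiv ℝ f) x (EuclideanSpace.single k 1) (EuclideanSpace.single l 1) := by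
    intro k l
    show fderiv ℝ (fun y => fderiv ℝ f y (EuclideanSpace.single l 1)) x _ = _
    rw [fderiv_clm_apply (hd x) (differentiableAt_const _)]
    simp
  rw [key, key]
  exact second_derivative_symmetric (fun y => (hf.diff y).hasFDerivAt) (hd x).hasFDerivAt _ _

theorem DD_congr (h : f =ᶠ[nhds x] g) : DD i f x = DD i g x := by
  unfold DD; rw [h.fderiv_eq]

theorem DD_hcs (hf : HasCompactSupport f) : HasCompactSupport (DD i f) :=
  (hf.fderiv_apply (𝕜 := ℝ) _)

theorem int_DD (hf : Sm f) (hc : HasCompactSupport f) : ∫ x, DD i f x = 0 := by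
  have hi : Integrable f := hf.continuous.integrable_of_hasCompactSupport hc
  have hi' : Integrable (DD i f) :=
    (hf.DD i).continuous.integrable_of_hasCompactSupport (DD_hcs hc)
  have := integral_mul_fderiv_eq_neg_fderiv_mul_of_integrable (𝕜 := ℝ) (μ := (volume : Measure (EE n)))
    (f := fun _ => (1:ℝ)) (g := f) (v := EuclideanSpace.single i 1)
    (by simp) (by simpa using! hi') (by simpa using hi)
    (fun _ _ => differentiableAt_const _) (fun x _ => hf.diff x)
  simpa using! this

end basics

noncomputable def PP {n : ℕ} (a : Fin n → Fin n → EE n → ℝ) (w : EE n → ℝ) (x : EE n) : ℝ :=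
  ∑ j, DD j (fun y => ∑ i, a i j y * DD i w y) x

noncomputable def GG {n : ℕ} (a : Fin n → Fin n → EE n → ℝ) (w : EE n → ℝ) (j : Fin n) (x : EE n) : ℝ :=
  ∑ i, a i j x * DD i w x

theorem Sm.GG {n : ℕ} {a : Fin n → Fin n → EE n → ℝ} {w : EE n → ℝ} (ha : ∀ i j, Sm (a i j))
    (hw : Sm w) (j : Fin n) : Sm (GG a w j) :=
  Sm.sum (fun i => (ha i j).mul (hw.DD i))

theorem Sm.PP {n : ℕ} {a : Fin n → Fin n → EE n → ℝ} {w : EE n → ℝ} (ha : ∀ i j, Sm (a i j))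
    (hw : Sm w) : Sm (PP a w) :=
  Sm.sum (fun j => (Sm.GG ha hw j).DD j)

theorem PP_eq {n : ℕ} (a : Fin n → Fin n → EE n → ℝ) (w : EE n → ℝ) (x : EE n) :
    PP a w x = ∑ j, DD j (GG a w j) x := rfl

theorem alg1 {n : ℕ} (a M : Fin n → Fin n → ℝ) (X p : Fin n → ℝ) (H : Fin n → Fin n → ℝ)
    (d : Fin n → Fin n → Fin n → ℝ)
    (hs : ∀ i j, a i j = a j i) (hH : ∀ i j, H i j = H j i) :
    2 * ∑ j, (∑ i, a i j * p i) * (∑ k, (M j k * p k + X k * H j k))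
      - ∑ k, X k * ∑ j, ((∑ i, (d k i j * p i + a i j * H k i)) * p j + (∑ i, a i j * p i) * H k j)
    = 2 * ∑ j, (∑ i, a i j * p i) * (∑ k, M j k * p k)
      - ∑ k, X k * ∑ j, ∑ i, d k i j * p i * p j := by
  have e1 : ∀ k, ∑ j, (∑ i, a i j * H k i) * p j = ∑ j, (∑ i, a i j * p i) * H k j := by
    intro k
    simp only [Finset.sum_mul]
    rw [Finset.sum_comm]
    refine Finset.sum_congr rfl fun j _ => Finset.sum_congr rfl fun i _ => ?_
    rw [hs i j]; ring
  have e2 : ∑ j, (∑ i, a i j * p i) * (∑ k, X k * H j k)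
      = ∑ k, X k * ∑ j, (∑ i, a i j * p i) * H k j := by
    simp only [Finset.mul_sum]
    rw [Finset.sum_comm]
    refine Finset.sum_congr rfl fun j _ => Finset.sum_congr rfl fun i _ => ?_
    rw [hH i j]; ring
  have e3 : ∀ k, ∑ j, ((∑ i, (d k i j * p i + a i j * H k i)) * p j + (∑ i, a i j * p i) * H k j)
      = ∑ j, ∑ i, d k i j * p i * p j + 2 * ∑ j, (∑ i, a i j * p i) * H k j := by
    intro k
    simp only [Finset.sum_add_distrib, add_mul, e1]
    simp only [Finset.sum_mul]
    ring
  simp only [e3]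
  simp only [Finset.sum_add_distrib, mul_add]
  rw [e2]
  simp only [Finset.mul_sum]
  have e4 : ∀ (F : Fin n → Fin n → ℝ), ∑ k, ∑ j, X k * (2 * F k j) = 2 * ∑ k, ∑ j, X k * F k j := by
    intro F
    simp only [Finset.mul_sum]
    exact Finset.sum_congr rfl fun j _ => Finset.sum_congr rfl fun i _ => by ring
  rw [e4]
  simp only [Finset.mul_sum]
  ring

theorem div_id {n : ℕ} {a : Fin n → Fin n → EE n → ℝ} (ha : ∀ i j, Sm (a i j))
    (hs : ∀ i j x, a i j x = a j i x) {X : Fin n → EE n → ℝ} (hX : ∀ i, Sm (X i))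
    {h q v : EE n → ℝ} (hh : Sm h) (hq : Sm q) (hv : Sm v) (s : ℝ) (x : EE n) :
    ∑ j, DD j (fun y => 2 * (GG a v j y * ∑ k, X k y * DD k v y) + GG a v j y * (h y * v y)
        - X j y * (∑ k, GG a v k y * DD k v y) + s * ((q y * X j y) * (v y * v y))) x
    = (PP a v x + s * q x * v x) * (2 * (∑ k, X k x * DD k v x) + h x * v x)
      + ((2 * ∑ j, GG a v j x * ∑ k, DD j (X k) x * DD k v x
          - ∑ k, X k x * ∑ j, ∑ i, DD k (a i j) x * DD i v x * DD j v x)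
        + (h x - ∑ k, DD k (X k) x) * (∑ k, GG a v k x * DD k v x)
        + v x * ∑ j, GG a v j x * DD j h x
        + s * (∑ k, X k x * DD k q x - (h x - ∑ k, DD k (X k) x) * q x) * (v x * v x)) := by
  have hG : ∀ j, Sm (GG a v j) := Sm.GG ha hv
  have hD : ∀ j, Sm (DD j v) := hv.DD
  have hN : Sm (fun y => ∑ k, X k y * DD k v y) := Sm.sum fun k => (hX k).mul (hD k)
  have hB : Sm (fun y => ∑ k, GG a v k y * DD k v y) := Sm.sum fun k => (hG k).mul (hD k)
  have e1 : ∀ j, DD j (fun y => 2 * (GG a v j y * ∑ k, X k y * DD k v y) + GG a v j y * (h y * v y)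
        - X j y * (∑ k, GG a v k y * DD k v y) + s * ((q y * X j y) * (v y * v y))) x
      = 2 * (DD j (GG a v j) x * (∑ k, X k x * DD k v x)
          + GG a v j x * DD j (fun y => ∑ k, X k y * DD k v y) x)
        + (DD j (GG a v j) x * (h x * v x) + GG a v j x * (DD j h x * v x + h x * DD j v x))
        - (DD j (X j) x * (∑ k, GG a v k x * DD k v x)
          + X j x * DD j (fun y => ∑ k, GG a v k y * DD k v y) x)
        + s * ((DD j q x * X j x + q x * DD j (X j) x) * (v x * v x)
          + (q x * X j x) * (DD j v x * v x + v x * DD j v x)) := by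
    intro j
    rw [DD_add (((contDiff_const.mul ((hG j).mul hN)).add ((hG j).mul (hh.mul hv))).sub
        ((hX j).mul hB)) (contDiff_const.mul ((hq.mul (hX j)).mul (hv.mul hv))),
      DD_sub ((contDiff_const.mul ((hG j).mul hN)).add ((hG j).mul (hh.mul hv)))
        ((hX j).mul hB),
      DD_add (contDiff_const.mul ((hG j).mul hN)) ((hG j).mul (hh.mul hv)),
      DD_cmul _ ((hG j).mul hN), DD_mul (hG j) hN, DD_mul (hG j) (hh.mul hv), DD_mul hh hv,
      DD_mul (hX j) hB, DD_cmul _ ((hq.mul (hX j)).mul (hv.mul hv)),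
      DD_mul (hq.mul (hX j)) (hv.mul hv), DD_mul hq (hX j), DD_mul hv hv]
  have e2 : ∀ j, DD j (fun y => ∑ k, X k y * DD k v y) x
      = ∑ k, (DD j (X k) x * DD k v x + X k x * DD j (DD k v) x) := by
    intro j
    rw [DD_sum (fun k => (hX k).mul (hD k))]
    exact Finset.sum_congr rfl fun k _ => DD_mul (hX k) (hD k)
  have e3 : ∀ k, DD k (fun y => ∑ j, GG a v j y * DD j v y) x
      = ∑ j, ((∑ i, (DD k (a i j) x * DD i v x + a i j x * DD k (DD i v) x)) * DD j v x
          + (∑ i, a i j x * DD i v x) * DD k (DD j v) x) := by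
    intro k
    rw [DD_sum (fun k => (hG k).mul (hD k))]
    refine Finset.sum_congr rfl fun j _ => ?_
    rw [DD_mul (hG j) (hD j)]
    congr 2
    show DD k (fun y => ∑ i, a i j y * DD i v y) x = _
    rw [DD_sum (fun i => (ha i j).mul (hD i))]
    exact Finset.sum_congr rfl fun i _ => DD_mul (ha i j) (hD i)
  have key := alg1 (fun i j => a i j x) (fun j k => DD j (X k) x) (fun k => X k x)
    (fun k => DD k v x) (fun i j => DD i (DD j v) x) (fun k i j => DD k (a i j) x)
    (fun i j => hs i j x) (fun i j => DD_comm hv)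
  simp only [← e2, ← e3] at key
  rw [Finset.sum_congr rfl fun j _ => e1 j]
  change 2 * ∑ j, GG a v j x * _ - _ = 2 * ∑ j, GG a v j x * _ - _ at key
  rw [← key, PP_eq]
  simp only [Finset.sum_add_distrib, Finset.sum_sub_distrib, ← Finset.mul_sum, mul_add, add_mul,
    ← Finset.sum_mul]
  generalize DD_N : (∑ j, GG a v j x * DD j (fun y => ∑ k, X k y * DD k v y) x) = DN
  generalize (∑ j, X j x * DD j (fun y => ∑ k, GG a v k y * DD k v y) x) = DB
  have f1 : ∑ j, GG a v j x * (DD j h x * v x) = v x * ∑ j, GG a v j x * DD j h x := by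
    rw [Finset.mul_sum]; exact Finset.sum_congr rfl fun i _ => by ring
  have f2 : ∑ j, GG a v j x * (h x * DD j v x) = h x * ∑ j, GG a v j x * DD j v x := by
    rw [Finset.mul_sum]; exact Finset.sum_congr rfl fun i _ => by ring
  have f3 : ∑ j, DD j q x * X j x = ∑ j, X j x * DD j q x :=
    Finset.sum_congr rfl fun i _ => by ring
  have f4 : ∑ j, q x * X j x * (DD j v x * v x) = q x * v x * ∑ j, X j x * DD j v x := by
    rw [Finset.mul_sum]; exact Finset.sum_congr rfl fun i _ => by ring
  have f5 : ∑ j, q x * X j x * (v x * DD j v x) = q x * v x * ∑ j, X j x * DD j v x := by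
    rw [Finset.mul_sum]; exact Finset.sum_congr rfl fun i _ => by ring
  rw [f1, f2, f3, f4, f5]
  ring

section car
variable {n : ℕ}

theorem DD_off {f : EE n → ℝ} {x : EE n} (i : Fin n) (h : x ∉ tsupport f) : DD i f x = 0 := by
  rw [notMem_tsupport_iff_eventuallyEq] at h
  rw [DD_congr h]
  simp [DD]

theorem tsupport_DD (i : Fin n) (f : EE n → ℝ) : tsupport (DD i f) ⊆ tsupport f := by
  refine closure_minimal (fun x hx => ?_) (isClosed_tsupport f)
  by_contra h
  exact hx (DD_off i h)

theorem GG_off (a : Fin n → Fin n → EE n → ℝ) {f : EE n → ℝ} {x : EE n} (j : Fin n)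
    (h : x ∉ tsupport f) : GG a f j x = 0 := by
  unfold GG
  exact Finset.sum_eq_zero fun i _ => by rw [DD_off i h, mul_zero]

theorem tsupport_GG (a : Fin n → Fin n → EE n → ℝ) (j : Fin n) (f : EE n → ℝ) :
    tsupport (GG a f j) ⊆ tsupport f := by
  refine closure_minimal (fun x hx => ?_) (isClosed_tsupport f)
  by_contra h
  exact hx (GG_off a j h)

theorem PP_off (a : Fin n → Fin n → EE n → ℝ) {f : EE n → ℝ} {x : EE n}
    (h : x ∉ tsupport f) : PP a f x = 0 := by
  rw [PP_eq]
  exact Finset.sum_eq_zero fun i _ => DD_off i fun h' => h (tsupport_GG a i f h')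

theorem conj_id {a : Fin n → Fin n → EE n → ℝ} (ha : ∀ i j, Sm (a i j))
    (hs : ∀ i j x, a i j x = a j i x) {φ w : EE n → ℝ} (hφ : Sm φ) (hw : Sm w) (t : ℝ) (x : EE n)
    {v : EE n → ℝ} (hv : v = fun y => Real.exp (t * φ y) * w y) :
    Real.exp (t * φ x) * PP a w x = PP a v x + t ^ 2 * (∑ k, GG a φ k x * DD k φ x) * v x
      + (- 2 * t * (∑ k, GG a φ k x * DD k v x) - t * (∑ k, DD k (GG a φ k) x) * v x) := by
  have htφ : Sm (fun y => t * φ y) := contDiff_const.mul hφ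
  have he : Sm (fun y => Real.exp (t * φ y)) := htφ.exp
  have dv : ∀ i y, DD i v y = Real.exp (t * φ y) * (DD i w y + t * (DD i φ y * w y)) := by
    intro i y
    rw [hv, DD_mul he hw, DD_exp htφ, DD_cmul _ hφ]; ring
  have gv : ∀ j, GG a v j = fun y => Real.exp (t * φ y) * (GG a w j y + t * (GG a φ j y * w y)) := by
    intro j
    funext y
    unfold GG
    simp only [dv]
    simp only [Finset.sum_mul, Finset.mul_sum, ← Finset.sum_add_distrib]
    exact Finset.sum_congr rfl fun i _ => by ring
  have hX : ∀ j, Sm (GG a φ j) := Sm.GG ha hφ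
  have hG : ∀ j, Sm (GG a w j) := Sm.GG ha hw
  have dgv : ∀ j, DD j (GG a v j) x = Real.exp (t * φ x) * (t * (DD j φ x * GG a w j x)
      + t ^ 2 * (GG a φ j x * DD j φ x * w x) + DD j (GG a w j) x + t * (DD j (GG a φ j) x * w x)
        + t * (GG a φ j x * DD j w x)) := by
    intro j
    rw [gv, DD_mul he ((hG j).add (contDiff_const.mul ((hX j).mul hw))), DD_exp htφ, DD_cmul _ hφ,
      DD_add (hG j) (contDiff_const.mul ((hX j).mul hw)), DD_cmul _ ((hX j).mul hw),
      DD_mul (hX j) hw]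
    ring
  have sw : ∑ j, DD j φ x * GG a w j x = ∑ j, GG a φ j x * DD j w x := by
    unfold GG
    simp only [Finset.sum_mul, Finset.mul_sum]
    rw [Finset.sum_comm]
    refine Finset.sum_congr rfl fun i _ => Finset.sum_congr rfl fun j _ => ?_
    rw [hs i j]; ring
  have nv : ∑ k, GG a φ k x * DD k v x = Real.exp (t * φ x) * (∑ k, GG a φ k x * DD k w x
      + t * ((∑ k, GG a φ k x * DD k φ x) * w x)) := by
    simp only [dv, Finset.sum_mul, Finset.mul_sum, ← Finset.sum_add_distrib]
    exact Finset.sum_congr rfl fun i _ => by ring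
  rw [nv, PP_eq a v, Finset.sum_congr rfl fun j _ => dgv j, PP_eq]
  simp only [← Finset.mul_sum, Finset.sum_add_distrib, sw, ← Finset.sum_mul]
  rw [hv]
  ring

theorem bdd_on {K : Set (EE n)} (hK : IsCompact K) {f : EE n → ℝ} (hf : Continuous f) :
    ∃ M, 0 ≤ M ∧ ∀ x ∈ K, |f x| ≤ M := by
  obtain ⟨M, hM⟩ := hK.exists_bound_of_continuousOn hf.continuousOn
  exact ⟨|M|, abs_nonneg _, fun x hx => (hM x hx).trans (le_abs_self _)⟩

theorem carleman {a : Fin n → Fin n → EE n → ℝ} (ha : ∀ i j, Sm (a i j))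
    (hs : ∀ i j x, a i j x = a j i x) {φ μ : EE n → ℝ} (hφ : Sm φ) (hμ : Sm μ)
    {K : Set (EE n)} (hK : IsCompact K) {c : ℝ} (hc : 0 < c)
    (h1 : ∀ x ∈ K, ∀ ξ : Fin n → ℝ, c * ∑ i, ξ i ^ 2 ≤
      (2 * ∑ j, (∑ i, a i j x * ξ i) * ∑ k, DD j (GG a φ k) x * ξ k
          - ∑ k, GG a φ k x * ∑ j, ∑ i, DD k (a i j) x * ξ i * ξ j)
        + μ x * ∑ k, (∑ i, a i k x * ξ i) * ξ k)
    (h2 : ∀ x ∈ K, c ≤ ∑ k, GG a φ k x * DD k (fun y => ∑ k, GG a φ k y * DD k φ y) x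
        - μ x * ∑ k, GG a φ k x * DD k φ x) :
    ∃ t₀ : ℝ, 0 < t₀ ∧ ∀ t : ℝ, t₀ ≤ t → ∀ w : EE n → ℝ, Sm w → HasCompactSupport w →
      tsupport w ⊆ K →
      c * t ^ 3 * ∫ x, (Real.exp (t * φ x) * w x) ^ 2 ≤
        ∫ x, (Real.exp (t * φ x) * PP a w x) ^ 2 := by
  have hX : ∀ j, Sm (GG a φ j) := Sm.GG ha hφ
  set q : EE n → ℝ := fun y => ∑ k, GG a φ k y * DD k φ y with hqd
  have hq : Sm q := Sm.sum fun k => (hX k).mul (hφ.DD k)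
  set h : EE n → ℝ := fun y => (∑ k, DD k (GG a φ k) y) + μ y with hhd
  have hh : Sm h := (Sm.sum fun k => (hX k).DD k).add hμ
  obtain ⟨M, hM0, hM⟩ := bdd_on hK (f := fun x => ∑ i, (∑ j, a i j x * DD j h x) ^ 2 / (4 * c))
    (Sm.sum fun i => ((Sm.sum fun j => (ha i j).mul (hh.DD j)).pow 2).div_const _).continuous
  obtain ⟨M2, hM20, hM2⟩ := bdd_on hK (f := fun x => μ x ^ 2) (hμ.pow 2).continuous
  refine ⟨1 + 2 / c * (M + M2), by positivity, fun t ht w hw hwc hwK => ?_⟩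
  have ht1 : 1 ≤ t := le_trans (by have : 0 ≤ 2 / c * (M + M2) := by positivity
                                   linarith) ht
  have ht2 : 2 * (M + M2) ≤ c * t := by
    have : 2 / c * (M + M2) ≤ t := by linarith
    calc 2 * (M + M2) = c * (2 / c * (M + M2)) := by field_simp
      _ ≤ c * t := by gcongr
  have htφ : Sm (fun y => t * φ y) := contDiff_const.mul hφ
  have he : Sm (fun y => Real.exp (t * φ y)) := htφ.exp
  set v : EE n → ℝ := fun y => Real.exp (t * φ y) * w y with hvd
  have hv : Sm v := he.mul hw
  have hvw : tsupport v ⊆ tsupport w := closure_mono fun x hx => by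
    intro h'; apply hx; simp [hvd, h']
  have hv0 : ∀ x, x ∉ tsupport w → v x = 0 := fun x hx => by
    simp [hvd, image_eq_zero_of_notMem_tsupport hx]
  have hdv0 : ∀ x, x ∉ tsupport w → ∀ i, DD i v x = 0 := fun x hx i =>
    DD_off i fun h' => hx (hvw h')
  have hgv0 : ∀ x, x ∉ tsupport w → ∀ i, GG a v i x = 0 := fun x hx i =>
    GG_off a i fun h' => hx (hvw h')
  let F : Fin n → EE n → ℝ := fun j y =>
      2 * (GG a v j y * ∑ k, GG a φ k y * DD k v y) + GG a v j y * (h y * v y)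
        - GG a φ j y * (∑ k, GG a v k y * DD k v y) + t ^ 2 * ((q y * GG a φ j y) * (v y * v y))
  have hG : ∀ j, Sm (GG a v j) := Sm.GG ha hv
  have hF : ∀ j, Sm (F j) := fun j =>
    (((contDiff_const.mul ((hG j).mul (Sm.sum fun k => (hX k).mul (hv.DD k)))).add
      ((hG j).mul (hh.mul hv))).sub
      ((hX j).mul (Sm.sum fun k => (hG k).mul (hv.DD k)))).add
      (contDiff_const.mul ((hq.mul (hX j)).mul (hv.mul hv)))
  have hFc : ∀ j, HasCompactSupport (F j) := fun j =>
    HasCompactSupport.intro hwc fun x hx => by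
      simp [F, hgv0 x hx, hdv0 x hx, hv0 x hx]
  -- pointwise inequality
  have pw : ∀ x, c * t ^ 3 * (v x) ^ 2 - 2 * t * ∑ j, DD j (F j) x
      ≤ (Real.exp (t * φ x) * PP a w x) ^ 2 := by
    intro x
    have id1 := div_id ha hs hX hh hq hv (t ^ 2) x
    have id2 := conj_id ha hs hφ hw t x hvd
    rw [id2]
    change ∑ j, DD j (F j) x = _ at id1
    rw [id1]
    have ehμ : h x - ∑ k, DD k (GG a φ k) x = μ x := by simp [hhd]
    rw [ehμ]
    have eh : h x = (∑ k, DD k (GG a φ k) x) + μ x := rfl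
    change _ ≤ (_ + t ^ 2 * q x * v x + _) ^ 2
    -- bracket
    have br : c / 2 * t ^ 2 * (v x) ^ 2 ≤
        ((2 * ∑ j, GG a v j x * ∑ k, DD j (GG a φ k) x * DD k v x
          - ∑ k, GG a φ k x * ∑ j, ∑ i, DD k (a i j) x * DD i v x * DD j v x)
        + μ x * (∑ k, GG a v k x * DD k v x)
        + v x * ∑ j, GG a v j x * DD j h x
        + t ^ 2 * (∑ k, GG a φ k x * DD k q x - μ x * q x) * (v x * v x))
        - t / 2 * (μ x ^ 2 * v x ^ 2) := by
      by_cases hx : x ∈ tsupport w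
      · have hxK := hwK hx
        have g1 := h1 x hxK (fun i => DD i v x)
        change _ ≤ (2 * ∑ j, GG a v j x * _ - _) + _ * ∑ k, GG a v k x * _ at g1
        have g2 := h2 x hxK
        change c ≤ _ - μ x * q x at g2
        have g3 := hM x hxK
        have g4 := hM2 x hxK
        rw [abs_le] at g3 g4
        have g5 : ∑ j, GG a v j x * DD j h x = ∑ i, (∑ j, a i j x * DD j h x) * DD i v x := by
          unfold GG
          simp only [Finset.sum_mul]
          rw [Finset.sum_comm]
          exact Finset.sum_congr rfl fun i _ => Finset.sum_congr rfl fun j _ => by ring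
        have g6 : 0 ≤ c * ∑ i, (DD i v x) ^ 2 + v x * ∑ j, GG a v j x * DD j h x
            + (∑ i, (∑ j, a i j x * DD j h x) ^ 2 / (4 * c)) * v x ^ 2 := by
          rw [g5, Finset.mul_sum, Finset.mul_sum, Finset.sum_mul, ← Finset.sum_add_distrib,
            ← Finset.sum_add_distrib]
          refine Finset.sum_nonneg fun i _ => ?_
          generalize (∑ j, a i j x * DD j h x) = b
          have : c * DD i v x ^ 2 + v x * (b * DD i v x) + b ^ 2 / (4 * c) * v x ^ 2
            = c * (DD i v x + b * v x / (2 * c)) ^ 2 := by field_simp; ring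
          rw [this]; positivity
        have g7 : (∑ i, (∑ j, a i j x * DD j h x) ^ 2 / (4 * c)) * v x ^ 2 ≤ M * v x ^ 2 :=
          mul_le_mul_of_nonneg_right g3.2 (sq_nonneg _)
        have g8 : μ x ^ 2 * v x ^ 2 ≤ M2 * v x ^ 2 :=
          mul_le_mul_of_nonneg_right g4.2 (sq_nonneg _)
        have g9 : t ^ 2 * c * (v x * v x) ≤
          t ^ 2 * (∑ k, GG a φ k x * DD k q x - μ x * q x) * (v x * v x) := by
          have := mul_self_nonneg (v x)
          gcongr
        have g10 : M + t / 2 * M2 ≤ c / 2 * t ^ 2 := by nlinarith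
        have g11 : (M + t / 2 * M2) * v x ^ 2 ≤ c / 2 * t ^ 2 * v x ^ 2 :=
          mul_le_mul_of_nonneg_right g10 (sq_nonneg _)
        have g12 : t / 2 * (μ x ^ 2 * v x ^ 2) ≤ t / 2 * (M2 * v x ^ 2) := by gcongr
        linarith
      · simp [hv0 x hx, hdv0 x hx, hgv0 x hx]
    generalize ((2 * ∑ j, GG a v j x * ∑ k, DD j (GG a φ k) x * DD k v x
          - ∑ k, GG a φ k x * ∑ j, ∑ i, DD k (a i j) x * DD i v x * DD j v x)
        + μ x * (∑ k, GG a v k x * DD k v x)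
        + v x * ∑ j, GG a v j x * DD j h x
        + t ^ 2 * (∑ k, GG a φ k x * DD k q x - μ x * q x) * (v x * v x)) = R at br ⊢
    rw [eh]
    generalize (∑ k, DD k (GG a φ k) x) = dX
    generalize (∑ k, GG a φ k x * DD k v x) = N
    generalize PP a v x = p
    have br2 := mul_le_mul_of_nonneg_left br (show 0 ≤ 2 * t by linarith)
    nlinarith [sq_nonneg (p + t ^ 2 * q x * v x + t * μ x * v x),
      sq_nonneg (-2 * t * N - t * dX * v x)]
  have i1 : Integrable (fun x => c * t ^ 3 * (v x) ^ 2) :=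
    (Continuous.integrable_of_hasCompactSupport
      (contDiff_const.mul (hv.pow 2)).continuous
      (HasCompactSupport.intro hwc fun x hx => by simp [hv0 x hx]))
  have i2 : ∀ j, Integrable (fun x => DD j (F j) x) := fun j =>
    ((hF j).DD j).continuous.integrable_of_hasCompactSupport (DD_hcs (hFc j))
  have i3 : Integrable (fun x => 2 * t * ∑ j, DD j (F j) x) :=
    (integrable_finsetSum _ fun j _ => i2 j).const_mul _
  have i4 : Integrable (fun x => (Real.exp (t * φ x) * PP a w x) ^ 2) :=
    (Continuous.integrable_of_hasCompactSupport
      ((he.mul (Sm.PP ha hw)).pow 2).continuous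
      (HasCompactSupport.intro hwc fun x hx => by simp [PP_off a hx]))
  have := integral_mono (i1.sub i3) i4 pw
  simp only [Pi.sub_apply] at this
  rw [integral_sub i1 i3, integral_const_mul, integral_const_mul,
    integral_finsetSum _ fun j _ => i2 j, Finset.sum_eq_zero fun j _ => int_DD (hF j) (hFc j)] at this
  simpa using this

end car

section wt
variable {n : ℕ}

theorem form_bd (m : Fin n → Fin n → ℝ) (ξ : Fin n → ℝ) :
    |∑ i, ∑ k, m i k * ξ i * ξ k| ≤ (∑ i, ∑ k, |m i k|) * ∑ l, ξ l ^ 2 := by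
  have hs : ∀ i, ξ i ^ 2 ≤ ∑ l, ξ l ^ 2 := fun i =>
    Finset.single_le_sum (f := fun l => ξ l ^ 2) (fun l _ => sq_nonneg _) (Finset.mem_univ i)
  rw [Finset.sum_mul]
  refine (Finset.abs_sum_le_sum_abs _ _).trans (Finset.sum_le_sum fun i _ => ?_)
  rw [Finset.sum_mul]
  refine (Finset.abs_sum_le_sum_abs _ _).trans (Finset.sum_le_sum fun k _ => ?_)
  rw [mul_assoc, abs_mul]
  refine mul_le_mul_of_nonneg_left ?_ (abs_nonneg _)
  have h1 := hs i
  have h2 := hs k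
  rw [abs_le]
  constructor <;> nlinarith [sq_nonneg (ξ i - ξ k), sq_nonneg (ξ i + ξ k)]

theorem form_eq (a M : Fin n → Fin n → ℝ) (Y : Fin n → ℝ) (d : Fin n → Fin n → Fin n → ℝ)
    (ξ : Fin n → ℝ) :
    2 * ∑ j, (∑ i, a i j * ξ i) * (∑ k, M j k * ξ k)
      - ∑ k, Y k * ∑ j, ∑ i, d k i j * ξ i * ξ j
    = ∑ i, ∑ k, (2 * (∑ j, a i j * M j k) - ∑ l, Y l * d l i k) * ξ i * ξ k := by
  have e1 : ∑ j, (∑ i, a i j * ξ i) * (∑ k, M j k * ξ k)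
      = ∑ i, ∑ k, (∑ j, a i j * M j k) * ξ i * ξ k := by
    have : ∀ j, (∑ i, a i j * ξ i) * (∑ k, M j k * ξ k) =
        ∑ i, ∑ k, (a i j * M j k) * ξ i * ξ k := by
      intro j
      rw [Finset.sum_mul_sum]
      exact Finset.sum_congr rfl fun i _ => Finset.sum_congr rfl fun k _ => by ring
    rw [Finset.sum_congr rfl fun j _ => this j, Finset.sum_comm]
    refine Finset.sum_congr rfl fun i _ => ?_
    rw [Finset.sum_comm]
    refine Finset.sum_congr rfl fun k _ => ?_
    simp only [Finset.sum_mul]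
  have e2 : ∑ k, Y k * ∑ j, ∑ i, d k i j * ξ i * ξ j
      = ∑ i, ∑ k, (∑ l, Y l * d l i k) * ξ i * ξ k := by
    simp only [Finset.mul_sum]
    rw [Finset.sum_comm]
    have : ∀ j, ∑ k, ∑ i, Y k * (d k i j * ξ i * ξ j)
        = ∑ i, (∑ l, Y l * d l i j) * ξ i * ξ j := by
      intro j
      rw [Finset.sum_comm]
      refine Finset.sum_congr rfl fun i _ => ?_
      simp only [Finset.sum_mul]
      exact Finset.sum_congr rfl fun k _ => by ring
    rw [Finset.sum_congr rfl fun j _ => this j, Finset.sum_comm]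
  rw [e1, e2, Finset.mul_sum, ← Finset.sum_sub_distrib]
  refine Finset.sum_congr rfl fun i _ => ?_
  rw [Finset.mul_sum, ← Finset.sum_sub_distrib]
  exact Finset.sum_congr rfl fun k _ => by ring

theorem weight {a : Fin n → Fin n → EE n → ℝ} (ha : ∀ i j, Sm (a i j))
    (hs : ∀ i j x, a i j x = a j i x) {ψ : EE n → ℝ} (hψ : Sm ψ)
    {K : Set (EE n)} (hK : IsCompact K) {c₀ p₀ : ℝ} (hc₀ : 0 < c₀) (hp₀ : 0 < p₀)
    (hell : ∀ x ∈ K, ∀ ξ : Fin n → ℝ, c₀ * ∑ i, ξ i ^ 2 ≤ ∑ k, (∑ i, a i k x * ξ i) * ξ k)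
    (hp : ∀ x ∈ K, p₀ ≤ ∑ k, GG a ψ k x * DD k ψ x) :
    ∃ γ : ℝ, 0 < γ ∧ ∃ c : ℝ, 0 < c ∧ ∃ t₀ : ℝ, 0 < t₀ ∧ ∀ t : ℝ, t₀ ≤ t →
      ∀ w : EE n → ℝ, Sm w → HasCompactSupport w → tsupport w ⊆ K →
      c * t ^ 3 * ∫ x, (Real.exp (t * Real.exp (γ * ψ x)) * w x) ^ 2 ≤
        ∫ x, (Real.exp (t * Real.exp (γ * ψ x)) * PP a w x) ^ 2 := by
  have hY : ∀ j, Sm (GG a ψ j) := Sm.GG ha hψ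
  set p : EE n → ℝ := fun y => ∑ k, GG a ψ k y * DD k ψ y with hpd
  have hpS : Sm p := Sm.sum fun k => (hY k).mul (hψ.DD k)
  obtain ⟨C1, hC10, hC1⟩ := bdd_on hK (f := fun x => ∑ i, ∑ k,
      |2 * (∑ j, a i j x * DD j (GG a ψ k) x) - ∑ l, GG a ψ l x * DD l (a i k) x|)
    (continuous_finsetSum _ fun i _ => continuous_finsetSum _ fun k _ => continuous_abs.comp
      (ContDiff.continuous (𝕜 := ℝ) (n := (⊤ : ℕ∞)) ((contDiff_const.mul (Sm.sum fun j => (ha i j).mul ((hY k).DD j))).sub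
        (Sm.sum fun l => (hY l).mul ((ha i k).DD l)))))
  obtain ⟨Mψ, hMψ0, hMψ⟩ := bdd_on hK hψ.continuous
  set κ : ℝ := (C1 + 1) / c₀ with hκ
  obtain ⟨C2, hC20, hC2⟩ := bdd_on hK (f := fun x => (∑ k, GG a ψ k x * DD k p x) - κ * p x)
    (ContDiff.continuous (𝕜 := ℝ) (n := (⊤ : ℕ∞)) ((Sm.sum fun k => (hY k).mul (hpS.DD k)).sub
      (contDiff_const.mul hpS)))
  set γ : ℝ := (C2 + 1) / (2 * p₀ ^ 2) with hγ
  have hγ0 : 0 < γ := by positivity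
  have hκ0 : 0 < κ := by positivity
  set φ : EE n → ℝ := fun y => Real.exp (γ * ψ y) with hφd
  have hγψ : Sm (fun y => γ * ψ y) := contDiff_const.mul hψ
  have hφ : Sm φ := hγψ.exp
  have hφ0 : ∀ x, 0 < φ x := fun x => Real.exp_pos _
  set δ : ℝ := Real.exp (-(γ * Mψ)) with hδ
  have hδ0 : 0 < δ := Real.exp_pos _
  have hφδ : ∀ x ∈ K, δ ≤ φ x := by
    intro x hx
    apply Real.exp_le_exp.2
    have := (abs_le.1 (hMψ x hx)).1
    nlinarith
  have hdφ : ∀ i x, DD i φ x = γ * (φ x * DD i ψ x) := by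
    intro i x
    rw [hφd, DD_exp hγψ, DD_cmul _ hψ]; ring
  have hXY : ∀ k, GG a φ k = fun x => γ * (φ x * GG a ψ k x) := by
    intro k
    funext x
    unfold GG
    simp only [hdφ, Finset.mul_sum]
    exact Finset.sum_congr rfl fun i _ => by ring
  have hdX : ∀ j k x, DD j (GG a φ k) x
      = γ * (γ * (φ x * DD j ψ x) * GG a ψ k x + φ x * DD j (GG a ψ k) x) := by
    intro j k x
    rw [hXY, DD_cmul _ (hφ.mul (hY k)), DD_mul hφ (hY k), hdφ]
  have hqe : (fun y => ∑ k, GG a φ k y * DD k φ y) = fun y => γ ^ 2 * ((φ y * φ y) * p y) := by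
    funext y
    simp only [hXY, hdφ, hpd, Finset.mul_sum]
    exact Finset.sum_congr rfl fun i _ => by ring
  have hdq : ∀ k x, DD k (fun y => ∑ k, GG a φ k y * DD k φ y) x
      = γ ^ 2 * (2 * γ * (φ x * φ x) * DD k ψ x * p x + (φ x * φ x) * DD k p x) := by
    intro k x
    rw [hqe, DD_cmul _ ((hφ.mul hφ).mul hpS), DD_mul (hφ.mul hφ) hpS, DD_mul hφ hφ, hdφ]; ring
  refine ⟨γ, hγ0, min (γ * δ) (γ ^ 3 * δ ^ 3), by positivity, ?_⟩
  refine carleman ha hs hφ (μ := fun x => κ * γ * φ x) (contDiff_const.mul hφ) hK (by positivity)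
    ?_ ?_
  · intro x hx ξ
    have hS : 0 ≤ ∑ i, ξ i ^ 2 := Finset.sum_nonneg fun i _ => sq_nonneg _
    have e := form_eq (fun i j => a i j x) (fun j k => DD j (GG a ψ k) x) (fun k => GG a ψ k x)
      (fun k i j => DD k (a i j) x) ξ
    have b := form_bd (fun i k =>
      2 * (∑ j, a i j x * DD j (GG a ψ k) x) - ∑ l, GG a ψ l x * DD l (a i k) x) ξ
    rw [← e] at b
    have b1 := (abs_le.1 (hC1 x hx)).2
    have b2 := (abs_le.1 b).1
    have b3 := mul_le_mul_of_nonneg_right b1 hS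
    have l := hell x hx ξ
    have sq : ∑ j, (∑ i, a i j x * ξ i) * DD j ψ x = ∑ k, GG a ψ k x * ξ k := by
      unfold GG
      simp only [Finset.sum_mul]
      rw [Finset.sum_comm]
      refine Finset.sum_congr rfl fun i _ => Finset.sum_congr rfl fun j _ => ?_
      rw [hs i j]; ring
    have e1 : ∑ j, (∑ i, a i j x * ξ i) * ∑ k, DD j (GG a φ k) x * ξ k
      = γ * φ x * (γ * (∑ k, GG a ψ k x * ξ k) ^ 2
        + ∑ j, (∑ i, a i j x * ξ i) * ∑ k, DD j (GG a ψ k) x * ξ k) := by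
      have : ∀ j, ∑ k, DD j (GG a φ k) x * ξ k = γ * φ x * (γ * DD j ψ x * (∑ k, GG a ψ k x * ξ k)
          + ∑ k, DD j (GG a ψ k) x * ξ k) := by
        intro j
        simp only [hdX, Finset.mul_sum, ← Finset.sum_add_distrib]
        exact Finset.sum_congr rfl fun i _ => by ring
      simp only [this]
      generalize (∑ k, GG a ψ k x * ξ k) = Z at *
      rw [pow_two]
      nth_rewrite 2 [← sq]
      rw [Finset.sum_mul, Finset.mul_sum, ← Finset.sum_add_distrib, Finset.mul_sum]
      exact Finset.sum_congr rfl fun i _ => by ring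
    have e2 : ∑ k, GG a φ k x * ∑ j, ∑ i, DD k (a i j) x * ξ i * ξ j
      = γ * φ x * ∑ k, GG a ψ k x * ∑ j, ∑ i, DD k (a i j) x * ξ i * ξ j := by
      rw [Finset.mul_sum]
      simp only [hXY]
      exact Finset.sum_congr rfl fun i _ => by ring
    rw [e1, e2]
    set Q1 := ∑ j, (∑ i, a i j x * ξ i) * ∑ k, DD j (GG a ψ k) x * ξ k
    set Q2 := ∑ k, GG a ψ k x * ∑ j, ∑ i, DD k (a i j) x * ξ i * ξ j
    set Z := ∑ k, GG a ψ k x * ξ k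
    set AA := ∑ k, (∑ i, a i k x * ξ i) * ξ k
    set SS := ∑ i, ξ i ^ 2
    have k1 : κ * (c₀ * SS) ≤ κ * AA := by gcongr
    have k2 : κ * (c₀ * SS) = (C1 + 1) * SS := by rw [hκ]; field_simp
    have k3 : SS ≤ 2 * (γ * Z ^ 2 + Q1) - Q2 + κ * AA := by
      have : 0 ≤ γ * Z ^ 2 := by positivity
      linarith
    calc min (γ * δ) (γ ^ 3 * δ ^ 3) * SS ≤ γ * φ x * SS := by
          refine mul_le_mul_of_nonneg_right ((min_le_left _ _).trans ?_) hS
          have := hφδ x hx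
          gcongr
      _ ≤ γ * φ x * (2 * (γ * Z ^ 2 + Q1) - Q2 + κ * AA) := by
          have := hφ0 x
          gcongr
      _ = _ := by ring
  · intro x hx
    have e1 : ∑ k, GG a φ k x * DD k (fun y => ∑ k, GG a φ k y * DD k φ y) x
        = γ ^ 3 * φ x ^ 3 * (2 * γ * p x ^ 2 + ∑ k, GG a ψ k x * DD k p x) := by
      have : ∀ k, GG a φ k x * DD k (fun y => ∑ k, GG a φ k y * DD k φ y) x
        = γ ^ 3 * φ x ^ 3 * (2 * γ * p x * (GG a ψ k x * DD k ψ x) + GG a ψ k x * DD k p x) := by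
        intro k
        rw [hdq, hXY]; ring
      rw [Finset.sum_congr rfl fun k _ => this k, ← Finset.mul_sum, Finset.sum_add_distrib,
        ← Finset.mul_sum]
      show γ ^ 3 * φ x ^ 3 * (2 * γ * p x * p x + _) = _
      ring
    have e2 := congrFun hqe x
    rw [e1, e2]
    have b := (abs_le.1 (hC2 x hx)).1
    have pp : p₀ ≤ p x := hp x hx
    have k1 : C2 + 1 ≤ 2 * γ * p x ^ 2 := by
      calc C2 + 1 = 2 * γ * p₀ ^ 2 := by rw [hγ]; field_simp
        _ ≤ _ := by gcongr
    have hφx := hφ0 x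
    calc min (γ * δ) (γ ^ 3 * δ ^ 3) ≤ γ ^ 3 * φ x ^ 3 * 1 := by
          refine (min_le_right _ _).trans ?_
          rw [mul_one]
          have := hφδ x hx
          gcongr
      _ ≤ γ ^ 3 * φ x ^ 3 * (2 * γ * p x ^ 2 + ((∑ k, GG a ψ k x * DD k p x) - κ * p x)) := by
          gcongr
          linarith
      _ = _ := by ring

end wt

section uc
variable {n : ℕ}

theorem GG_congr (a : Fin n → Fin n → EE n → ℝ) {f g : EE n → ℝ} {x : EE n} (j : Fin n)
    (h : f =ᶠ[nhds x] g) : GG a f j =ᶠ[nhds x] GG a g j := by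
  filter_upwards [h.eventuallyEq_nhds] with y hy
  unfold GG
  exact Finset.sum_congr rfl fun i _ => by rw [DD_congr hy]

theorem PP_congr (a : Fin n → Fin n → EE n → ℝ) {f g : EE n → ℝ} {x : EE n}
    (h : f =ᶠ[nhds x] g) : PP a f x = PP a g x := by
  rw [PP_eq, PP_eq]
  exact Finset.sum_congr rfl fun j _ => DD_congr (GG_congr a j h)

set_option maxHeartbeats 2000000 in
theorem uc_ball {a : Fin n → Fin n → EE n → ℝ} (ha : ∀ i j, Sm (a i j))
    (hs : ∀ i j x, a i j x = a j i x) {Ω : Set (EE n)} {c₀ : ℝ} (hc₀ : 0 < c₀)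
    (hell : ∀ x ∈ Ω, ∀ ξ : Fin n → ℝ, c₀ * ∑ i, ξ i ^ 2 ≤ ∑ k, (∑ i, a i k x * ξ i) * ξ k)
    {u₁ u₂ : EE n → ℝ} (hu₁ : Sm u₁) (hu₂ : Sm u₂) {α β : ℝ}
    (hP₁ : ∀ x ∈ Ω, PP a u₁ x = α * u₁ x - β * u₂ x)
    (hP₂ : ∀ x ∈ Ω, PP a u₂ x = β * u₁ x + α * u₂ x)
    {x₀ : EE n} {r R : ℝ} (hr : 0 < r) (hR : Metric.ball x₀ R ⊆ Ω)
    (hz₁ : ∀ x ∈ Metric.ball x₀ r, u₁ x = 0) (hz₂ : ∀ x ∈ Metric.ball x₀ r, u₂ x = 0) :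
    ∀ y ∈ Metric.ball x₀ R, u₁ y = 0 ∧ u₂ y = 0 := by
  intro y hy
  rw [Metric.mem_ball] at hy
  set d := dist y x₀ with hd
  have hd0 : 0 ≤ d := dist_nonneg
  obtain ⟨s, hs0, hsR⟩ : ∃ s : ℝ, 0 < s ∧ d + 4 * s < R := ⟨(R - d) / 5, by linarith, by linarith⟩
  let χ : ContDiffBump x₀ := ⟨d + 3 * s, d + 4 * s, by linarith, by linarith⟩
  let b : ContDiffBump x₀ := ⟨d + s, d + 2 * s, by linarith, by linarith⟩
  let K : Set (EE n) := Metric.closedBall x₀ (d + 4 * s) \ Metric.ball x₀ r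
  have hK : IsCompact K := (isCompact_closedBall _ _).diff Metric.isOpen_ball
  have hKΩ : K ⊆ Ω := fun x hx => hR (Metric.closedBall_subset_ball hsR hx.1)
  let ψ : EE n → ℝ := fun x => - ‖x - x₀‖ ^ 2
  have hψ : Sm ψ := ((contDiff_id.sub contDiff_const).norm_sq ℝ).neg
  have hdψ : ∀ k x, DD k ψ x = - 2 * (x k - x₀ k) := by
    intro k x
    have h1 : HasFDerivAt (fun x : EE n => x - x₀) (ContinuousLinearMap.id ℝ (EE n)) x :=
      (hasFDerivAt_id x).sub_const x₀
    have h2 := h1.norm_sq.neg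
    show fderiv ℝ (-fun x : EE n => ‖x - x₀‖ ^ 2) x _ = _
    rw [HasFDerivAt.fderiv h2]
    simp [EuclideanSpace.inner_single_right]
  have hp : ∀ x ∈ K, c₀ * (4 * r ^ 2) ≤ ∑ k, GG a ψ k x * DD k ψ x := by
    intro x hx
    have h1 := hell x (hKΩ hx) (fun k => DD k ψ x)
    refine le_trans ?_ h1
    refine mul_le_mul_of_nonneg_left ?_ hc₀.le
    have h2 : ∑ i, DD i ψ x ^ 2 = 4 * ‖x - x₀‖ ^ 2 := by
      rw [EuclideanSpace.norm_sq_eq, Finset.mul_sum]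
      refine Finset.sum_congr rfl fun i _ => ?_
      rw [hdψ]; simp; ring
    rw [h2]
    have h3 : r ≤ ‖x - x₀‖ := by
      rw [← dist_eq_norm]; simpa using hx.2
    gcongr
  obtain ⟨γ, hγ, c, hc, t₀, ht₀, hcar⟩ := weight ha hs hψ hK hc₀ (p₀ := c₀ * (4 * r ^ 2))
    (by positivity) (fun x hx => hell x (hKΩ hx)) hp
  have hχ : Sm (χ : EE n → ℝ) := χ.contDiff
  have hb : Sm (b : EE n → ℝ) := b.contDiff
  have gen : ∀ u : EE n → ℝ, Sm u → (∀ x ∈ Metric.ball x₀ r, u x = 0) →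
      Sm (fun x => χ x * u x) ∧ HasCompactSupport (fun x => χ x * u x) ∧
      tsupport (fun x => χ x * u x) ⊆ K := by
    intro u hu hz
    refine ⟨hχ.mul hu, χ.hasCompactSupport.mul_right, ?_⟩
    refine closure_minimal (fun x hx => ?_) hK.isClosed
    rw [Function.mem_support] at hx
    have h1 : χ x ≠ 0 := left_ne_zero_of_mul hx
    have h2 : u x ≠ 0 := right_ne_zero_of_mul hx
    refine ⟨?_, fun h => h2 (hz x h)⟩
    have : x ∈ Function.support χ := h1
    rw [χ.support_eq] at this
    exact Metric.ball_subset_closedBall this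
  obtain ⟨hw₁, hwc₁, hwK₁⟩ := gen u₁ hu₁ hz₁
  obtain ⟨hw₂, hwc₂, hwK₂⟩ := gen u₂ hu₂ hz₂
  set w₁ : EE n → ℝ := fun x => χ x * u₁ x with hw₁d
  set w₂ : EE n → ℝ := fun x => χ x * u₂ x with hw₂d
  have hoff : ∀ x, x ∉ K → w₁ x = 0 ∧ w₂ x = 0 ∧ PP a w₁ x = 0 ∧ PP a w₂ x = 0 := fun x hx =>
    ⟨image_eq_zero_of_notMem_tsupport fun h => hx (hwK₁ h),
     image_eq_zero_of_notMem_tsupport fun h => hx (hwK₂ h),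
     PP_off a fun h => hx (hwK₁ h), PP_off a fun h => hx (hwK₂ h)⟩
  have hin : ∀ x ∈ Metric.ball x₀ (d + 3 * s),
      PP a w₁ x ^ 2 + PP a w₂ x ^ 2 = (α ^ 2 + β ^ 2) * (w₁ x ^ 2 + w₂ x ^ 2) := by
    intro x hx
    have h1 : ∀ᶠ z in nhds x, χ z = 1 := by
      filter_upwards [Metric.isOpen_ball.mem_nhds hx] with z hz
      exact χ.one_of_mem_closedBall (Metric.ball_subset_closedBall hz)
    have e1 : w₁ =ᶠ[nhds x] u₁ := by filter_upwards [h1] with z hz; simp [hw₁d, hz]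
    have e2 : w₂ =ᶠ[nhds x] u₂ := by filter_upwards [h1] with z hz; simp [hw₂d, hz]
    have hxΩ : x ∈ Ω := hR (Metric.ball_subset_ball (by linarith) hx)
    rw [PP_congr a e1, PP_congr a e2, e1.eq_of_nhds, e2.eq_of_nhds, hP₁ x hxΩ, hP₂ x hxΩ]
    ring
  have hPw₁ : Sm (PP a w₁) := Sm.PP ha hw₁
  have hPw₂ : Sm (PP a w₂) := Sm.PP ha hw₂
  set Φ₁ := Real.exp (γ * -(d + 3 * s) ^ 2) with hΦ₁
  set Φ₂ := Real.exp (γ * -(d + 2 * s) ^ 2) with hΦ₂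
  have hΦ : Φ₁ < Φ₂ := by
    apply Real.exp_lt_exp.2
    have : (d + 2 * s) ^ 2 < (d + 3 * s) ^ 2 := by nlinarith
    nlinarith
  set M := ∫ x, (PP a w₁ x ^ 2 + PP a w₂ x ^ 2) with hM
  set I := ∫ x, b x * (w₁ x ^ 2 + w₂ x ^ 2) with hI
  have intg : ∀ f : EE n → ℝ, Continuous f → (∀ x, x ∉ K → f x = 0) → Integrable f :=
    fun f hf h0 => hf.integrable_of_hasCompactSupport (HasCompactSupport.intro hK h0)
  have hWc : Continuous (fun x => w₁ x ^ 2 + w₂ x ^ 2) :=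
    (hw₁.continuous.pow 2).add (hw₂.continuous.pow 2)
  have hPc : Continuous (fun x => PP a w₁ x ^ 2 + PP a w₂ x ^ 2) :=
    (hPw₁.continuous.pow 2).add (hPw₂.continuous.pow 2)
  have main : ∀ t : ℝ, t₀ ≤ t → α ^ 2 + β ^ 2 + 1 ≤ c * t ^ 3 →
      Real.exp (2 * t * Φ₂) * I ≤ Real.exp (2 * t * Φ₁) * M := by
    intro t ht htc
    have ht0 : 0 < t := lt_of_lt_of_le ht₀ ht
    have hec : Continuous (fun x => Real.exp (t * Real.exp (γ * ψ x))) :=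
      Real.continuous_exp.comp (continuous_const.mul
        (Real.continuous_exp.comp (continuous_const.mul hψ.continuous)))
    set e : EE n → ℝ := fun x => Real.exp (t * Real.exp (γ * ψ x)) with hed
    have he2 : ∀ x, e x ^ 2 = Real.exp (2 * t * Real.exp (γ * ψ x)) := by
      intro x; rw [hed]; simp only; rw [← Real.exp_nat_mul]; congr 1; push_cast; ring
    have c1 := hcar t ht w₁ hw₁ hwc₁ hwK₁
    have c2 := hcar t ht w₂ hw₂ hwc₂ hwK₂
    have i1 : Integrable (fun x => (e x * w₁ x) ^ 2) :=
      intg _ ((hec.mul hw₁.continuous).pow 2) fun x hx => by simp [(hoff x hx).1]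
    have i2 : Integrable (fun x => (e x * w₂ x) ^ 2) :=
      intg _ ((hec.mul hw₂.continuous).pow 2) fun x hx => by simp [(hoff x hx).2.1]
    have i3 : Integrable (fun x => (e x * PP a w₁ x) ^ 2) :=
      intg _ ((hec.mul hPw₁.continuous).pow 2) fun x hx => by simp [(hoff x hx).2.2.1]
    have i4 : Integrable (fun x => (e x * PP a w₂ x) ^ 2) :=
      intg _ ((hec.mul hPw₂.continuous).pow 2) fun x hx => by simp [(hoff x hx).2.2.2]
    have i5 : Integrable (fun x => PP a w₁ x ^ 2 + PP a w₂ x ^ 2) :=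
      intg _ hPc fun x hx => by simp [(hoff x hx).2.2.1, (hoff x hx).2.2.2]
    have i6 : Integrable (fun x => b x * (w₁ x ^ 2 + w₂ x ^ 2)) :=
      intg _ (hb.continuous.mul hWc) fun x hx => by simp [(hoff x hx).1, (hoff x hx).2.1]
    have i12 : Integrable (fun x => (e x * w₁ x) ^ 2 + (e x * w₂ x) ^ 2) := i1.add i2
    have i34 : Integrable (fun x => (e x * PP a w₁ x) ^ 2 + (e x * PP a w₂ x) ^ 2) := i3.add i4
    set J := ∫ x, ((e x * w₁ x) ^ 2 + (e x * w₂ x) ^ 2) with hJ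
    have s1 : c * t ^ 3 * J ≤ ∫ x, ((e x * PP a w₁ x) ^ 2 + (e x * PP a w₂ x) ^ 2) := by
      rw [hJ, integral_add i1 i2, integral_add i3 i4, mul_add]
      exact add_le_add c1 c2
    have s2 : ∫ x, ((e x * PP a w₁ x) ^ 2 + (e x * PP a w₂ x) ^ 2)
        ≤ (α ^ 2 + β ^ 2) * J + Real.exp (2 * t * Φ₁) * M := by
      rw [hJ, hM, ← integral_const_mul, ← integral_const_mul,
        ← integral_add (i12.const_mul _) (i5.const_mul _)]
      refine integral_mono i34 ((i12.const_mul _).add (i5.const_mul _)) fun x => ?_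
      show (e x * PP a w₁ x) ^ 2 + (e x * PP a w₂ x) ^ 2 ≤
        (α ^ 2 + β ^ 2) * ((e x * w₁ x) ^ 2 + (e x * w₂ x) ^ 2) +
          Real.exp (2 * t * Φ₁) * (PP a w₁ x ^ 2 + PP a w₂ x ^ 2)
      simp only [mul_pow]
      rw [← mul_add, ← mul_add]
      by_cases hx : x ∈ Metric.ball x₀ (d + 3 * s)
      · rw [hin x hx]
        have : 0 ≤ Real.exp (2 * t * Φ₁) * ((α ^ 2 + β ^ 2) * (w₁ x ^ 2 + w₂ x ^ 2)) := by
          positivity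
        linarith
      · have h1 : e x ^ 2 ≤ Real.exp (2 * t * Φ₁) := by
          rw [he2]
          apply Real.exp_le_exp.2
          refine mul_le_mul_of_nonneg_left (Real.exp_le_exp.2 ?_) (by positivity)
          refine mul_le_mul_of_nonneg_left ?_ hγ.le
          have : d + 3 * s ≤ ‖x - x₀‖ := by rw [← dist_eq_norm]; simpa using hx
          show - ‖x - x₀‖ ^ 2 ≤ _
          gcongr
        have h2 : e x ^ 2 * (PP a w₁ x ^ 2 + PP a w₂ x ^ 2) ≤
            Real.exp (2 * t * Φ₁) * (PP a w₁ x ^ 2 + PP a w₂ x ^ 2) := by gcongr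
        have : 0 ≤ (α ^ 2 + β ^ 2) * (e x ^ 2 * (w₁ x ^ 2 + w₂ x ^ 2)) := by
          positivity
        linarith
    have hJ0 : 0 ≤ J := integral_nonneg fun x => by simp only [Pi.zero_apply]; positivity
    have s3 : J ≤ Real.exp (2 * t * Φ₁) * M := by nlinarith
    refine le_trans ?_ s3
    rw [hI, hJ, ← integral_const_mul]
    refine integral_mono (i6.const_mul _) i12 fun x => ?_
    simp only [mul_pow]
    rw [← mul_add]
    by_cases hx : x ∈ Metric.ball x₀ (d + 2 * s)
    · have h1 : Real.exp (2 * t * Φ₂) ≤ e x ^ 2 := by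
        rw [he2]
        apply Real.exp_le_exp.2
        refine mul_le_mul_of_nonneg_left (Real.exp_le_exp.2 ?_) (by positivity)
        refine mul_le_mul_of_nonneg_left ?_ hγ.le
        have : ‖x - x₀‖ ≤ d + 2 * s := by rw [← dist_eq_norm]; exact (Metric.mem_ball.1 hx).le
        show _ ≤ - ‖x - x₀‖ ^ 2
        gcongr
      have h2 : b x * (w₁ x ^ 2 + w₂ x ^ 2) ≤ w₁ x ^ 2 + w₂ x ^ 2 := 
        mul_le_of_le_one_left (by positivity) b.le_one
      exact mul_le_mul h1 h2 (mul_nonneg b.nonneg (by positivity)) (by positivity)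
    · have : b x = 0 := by
        have : x ∉ Function.support b := by rw [b.support_eq]; exact hx
        simpa using this
      rw [this]; simp only [zero_mul, mul_zero]; positivity
  have hMnn : 0 ≤ M := integral_nonneg fun x => by simp only [Pi.zero_apply]; positivity
  have hWy : w₁ y ^ 2 + w₂ y ^ 2 = 0 := by
    by_contra hne
    have hIpos : 0 < I := by
      refine Continuous.integral_pos_of_hasCompactSupport_nonneg_nonzero (x := y)
        (hb.continuous.mul hWc) ?_ ?_ ?_
      · exact b.hasCompactSupport.mul_right
      · intro x; exact mul_nonneg b.nonneg (by positivity)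
      · refine mul_ne_zero ?_ hne
        have : b y = 1 := b.one_of_mem_closedBall (by
          rw [Metric.mem_closedBall]; show d ≤ d + s; linarith)
        rw [this]; exact one_ne_zero
    have hδ : 0 < Φ₂ - Φ₁ := by linarith
    obtain ⟨t, ht1, ht2, ht3, ht4⟩ : ∃ t : ℝ, t₀ ≤ t ∧ 1 ≤ t ∧ (α ^ 2 + β ^ 2 + 1) / c ≤ t ∧
        M / (2 * (Φ₂ - Φ₁) * I) ≤ t := by
      refine ⟨t₀ + 1 + (α ^ 2 + β ^ 2 + 1) / c + M / (2 * (Φ₂ - Φ₁) * I), ?_, ?_, ?_, ?_⟩ <;>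
      · have h1 : 0 ≤ (α ^ 2 + β ^ 2 + 1) / c := by positivity
        have h2 : 0 ≤ M / (2 * (Φ₂ - Φ₁) * I) := by positivity
        linarith
    have ht5 : α ^ 2 + β ^ 2 + 1 ≤ c * t ^ 3 := by
      rw [div_le_iff₀ hc] at ht3
      have : t ≤ t ^ 3 := le_self_pow₀ ht2 (by norm_num)
      nlinarith
    have m := main t ht1 ht5
    rw [div_le_iff₀ (by positivity)] at ht4
    have e1 : Real.exp (2 * t * Φ₂) = Real.exp (2 * t * Φ₁) * Real.exp (2 * t * (Φ₂ - Φ₁)) := by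
      rw [← Real.exp_add]; congr 1; ring
    rw [e1, mul_assoc] at m
    have m2 := le_of_mul_le_mul_left m (Real.exp_pos _)
    have m3 := Real.add_one_le_exp (2 * t * (Φ₂ - Φ₁))
    nlinarith
  have hχy : χ y = 1 := χ.one_of_mem_closedBall (by
    rw [Metric.mem_closedBall]; show d ≤ d + 3 * s; linarith)
  simp only [hw₁d, hw₂d, hχy, one_mul] at hWy
  constructor <;> refine pow_eq_zero_iff (two_ne_zero) |>.1 ?_ <;>
    linarith [sq_nonneg (u₁ y), sq_nonneg (u₂ y)]

end uc

section glob
variable {n : ℕ}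

theorem uc_glob {a : Fin n → Fin n → EE n → ℝ} (ha : ∀ i j, Sm (a i j))
    (hs : ∀ i j x, a i j x = a j i x) {Ω ω : Set (EE n)} {c₀ : ℝ} (hc₀ : 0 < c₀)
    (hell : ∀ x ∈ Ω, ∀ ξ : Fin n → ℝ, c₀ * ∑ i, ξ i ^ 2 ≤ ∑ k, (∑ i, a i k x * ξ i) * ξ k)
    {u₁ u₂ : EE n → ℝ} (hu₁ : Sm u₁) (hu₂ : Sm u₂) {α β : ℝ}
    (hP₁ : ∀ x ∈ Ω, PP a u₁ x = α * u₁ x - β * u₂ x)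
    (hP₂ : ∀ x ∈ Ω, PP a u₂ x = β * u₁ x + α * u₂ x)
    (hΩo : IsOpen Ω) (hΩc : IsConnected Ω)
    (hωne : ω.Nonempty) (hωo : IsOpen ω) (hωΩ : ω ⊆ Ω)
    (hz : ∀ x ∈ ω, u₁ x = 0 ∧ u₂ x = 0) : ∀ x ∈ Ω, u₁ x = 0 ∧ u₂ x = 0 := by
  let Z : Set (EE n) := {x | ∀ᶠ y in nhds x, u₁ y = 0 ∧ u₂ y = 0}
  have hZo : IsOpen Z := isOpen_setOf_eventually_nhds
  have hsub : Ω ⊆ Z := by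
    refine hΩc.isPreconnected.subset_of_closure_inter_subset hZo ?_ ?_
    · obtain ⟨x, hx⟩ := hωne
      exact ⟨x, hωΩ hx, by filter_upwards [hωo.mem_nhds hx] with y hy using hz y hy⟩
    · rintro x ⟨hxc, hxΩ⟩
      obtain ⟨R, hR, hRΩ⟩ := Metric.isOpen_iff.1 hΩo x hxΩ
      obtain ⟨x₀, hx₀, hd⟩ := Metric.mem_closure_iff.1 hxc (R / 2) (by linarith)
      obtain ⟨r, hr, hrz⟩ := Metric.eventually_nhds_iff_ball.1 (show ∀ᶠ y in nhds x₀, _ from hx₀)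
      have key := uc_ball ha hs hc₀ hell hu₁ hu₂ hP₁ hP₂ (x₀ := x₀) (R := R / 2) hr
        (fun y hy => hRΩ (by
          rw [Metric.mem_ball] at hy ⊢
          have := dist_triangle y x₀ x
          rw [dist_comm x₀ x] at this
          linarith))
        (fun y hy => (hrz y hy).1) (fun y hy => (hrz y hy).2)
      show ∀ᶠ y in nhds x, _
      filter_upwards [Metric.isOpen_ball.mem_nhds (show x ∈ Metric.ball x₀ (R / 2) from hd)]
        with y hy using key y hy
  intro x hx
  exact (hsub hx).self_of_nhds

theorem max_pr (hn : 1 ≤ n) {a : Fin n → Fin n → EE n → ℝ} (ha : ∀ i j, Sm (a i j))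
    {Ω : Set (EE n)} {c₀ : ℝ} (hc₀ : 0 < c₀)
    (hell : ∀ x ∈ Ω, ∀ ξ : Fin n → ℝ, c₀ * ∑ i, ξ i ^ 2 ≤ ∑ k, (∑ i, a i k x * ξ i) * ξ k)
    {u : EE n → ℝ} (hu : Sm u) (hP : ∀ x ∈ Ω, PP a u x = 0)
    (hΩo : IsOpen Ω) (hΩb : Bornology.IsBounded Ω) (hd : ∀ x ∈ frontier Ω, u x = 0) :
    ∀ x ∈ Ω, u x ≤ 0 := by
  intro x hx
  refine le_of_forall_pos_le_add fun ε hε => ?_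
  rw [zero_add]
  let θ : ℝ → ℝ := fun t => Real.smoothTransition (t - ε)
  have hθ : ContDiff ℝ (⊤ : ℕ∞) θ :=
    Real.smoothTransition.contDiff.comp (contDiff_id.sub contDiff_const)
  have hθm : Monotone θ := fun s t h => Real.smoothTransition.monotone (by linarith)
  have hθd : ∀ t, 0 ≤ deriv θ t := fun t => hθm.deriv_nonneg
  let C : Set (EE n) := closure Ω ∩ {y | ε ≤ u y}
  have hCc : IsCompact C := hΩb.isCompact_closure.inter_right
    (isClosed_le continuous_const hu.continuous)
  have hCΩ : C ⊆ Ω := by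
    rintro y ⟨hy1, hy2⟩
    by_contra h
    have : y ∈ frontier Ω := by rw [hΩo.frontier_eq]; exact ⟨hy1, h⟩
    have := hd y this
    simp only [Set.mem_setOf_eq] at hy2
    linarith
  classical
  let T : EE n → ℝ := fun y => if y ∈ Ω then θ (u y) else 0
  have hT0 : ∀ y, y ∉ C → T y = 0 := by
    intro y hy
    by_cases h : y ∈ Ω
    · simp only [T, h, if_true, θ]
      apply Real.smoothTransition.zero_of_nonpos
      have : ¬ ε ≤ u y := fun h' => hy ⟨subset_closure h, h'⟩
      linarith
    · simp [T, h]
  have hTΩ : ∀ y ∈ Ω, T =ᶠ[nhds y] fun z => θ (u z) := by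
    intro y hy
    filter_upwards [hΩo.mem_nhds hy] with z hz
    simp [T, hz]
  have hTn : ∀ y, y ∉ C → T =ᶠ[nhds y] fun _ => 0 := by
    intro y hy
    filter_upwards [hCc.isClosed.isOpen_compl.mem_nhds hy] with z hz using hT0 z hz
  have hT : Sm T := by
    refine contDiff_iff_contDiffAt.2 fun y => ?_
    by_cases hy : y ∈ C
    · exact (hθ.comp hu).contDiffAt.congr_of_eventuallyEq (hTΩ y (hCΩ hy))
    · exact contDiffAt_const.congr_of_eventuallyEq (hTn y hy)
  have hdT : ∀ y ∈ Ω, ∀ j, DD j T y = deriv θ (u y) * DD j u y := by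
    intro y hy j
    rw [DD_congr (hTΩ y hy)]
    unfold DD
    have h1 : HasDerivAt θ (deriv θ (u y)) (u y) :=
      (hθ.differentiable (by simp) (u y)).hasDerivAt
    have h2 := h1.comp_hasFDerivAt y (hu.diff y).hasFDerivAt
    have h3 : fderiv ℝ (fun z => θ (u z)) y = _ := h2.fderiv
    rw [h3]; simp
  have hdT0 : ∀ y, y ∉ C → ∀ j, DD j T y = 0 := by
    intro y hy j
    rw [DD_congr (hTn y hy)]; simp [DD]
  have hG : ∀ j, Sm (GG a u j) := Sm.GG ha hu
  have hFs : ∀ j, Sm (fun y => T y * GG a u j y) := fun j => hT.mul (hG j)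
  have hFc : ∀ j, HasCompactSupport (fun y => T y * GG a u j y) := fun j =>
    HasCompactSupport.intro hCc fun y hy => by simp [hT0 y hy]
  have hdiv : ∀ y, ∑ j, DD j (fun y => T y * GG a u j y) y = ∑ j, DD j T y * GG a u j y := by
    intro y
    rw [Finset.sum_congr rfl fun j _ => DD_mul hT (hG j), Finset.sum_add_distrib,
      ← Finset.mul_sum, ← PP_eq]
    by_cases h : y ∈ Ω
    · rw [hP y h]; simp
    · simp [T, h]
  have hval : ∀ y ∈ Ω, ∑ j, DD j T y * GG a u j y
      = deriv θ (u y) * ∑ j, GG a u j y * DD j u y := by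
    intro y hy
    rw [Finset.mul_sum]
    exact Finset.sum_congr rfl fun j _ => by rw [hdT y hy]; ring
  have hge : ∀ y ∈ Ω, c₀ * ∑ j, DD j u y ^ 2 ≤ ∑ j, GG a u j y * DD j u y := fun y hy =>
    hell y hy (fun j => DD j u y)
  have hnn : ∀ y, 0 ≤ ∑ j, DD j T y * GG a u j y := by
    intro y
    by_cases hy : y ∈ C
    · rw [hval y (hCΩ hy)]
      refine mul_nonneg (hθd _) (le_trans ?_ (hge y (hCΩ hy)))
      positivity
    · simp [hdT0 y hy]
  have hint : ∫ y, ∑ j, DD j T y * GG a u j y = 0 := by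
    rw [← integral_congr_ae (Filter.Eventually.of_forall hdiv)]
    rw [integral_finsetSum _ fun j _ => ((hFs j).DD j).continuous.integrable_of_hasCompactSupport
      (DD_hcs (hFc j))]
    exact Finset.sum_eq_zero fun j _ => int_DD (hFs j) (hFc j)
  have hzero : ∀ y, ∑ j, DD j T y * GG a u j y = 0 := by
    intro y
    by_contra hne
    have := Continuous.integral_pos_of_hasCompactSupport_nonneg_nonzero (μ := volume) (x := y)
      (f := fun y => ∑ j, DD j T y * GG a u j y)
      (Sm.sum fun j => (hT.DD j).mul (hG j)).continuous
      (HasCompactSupport.intro hCc fun y hy => by simp [hdT0 y hy]) hnn hne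
    linarith
  have hDT : ∀ y j, DD j T y = 0 := by
    intro y j
    by_cases hy : y ∈ C
    · have hyΩ := hCΩ hy
      rw [hdT y hyΩ]
      have h1 := hzero y
      rw [hval y hyΩ] at h1
      rcases mul_eq_zero.1 h1 with h | h
      · rw [h, zero_mul]
      · have h2 := hge y hyΩ
        rw [h] at h2
        have h3 : DD j u y ^ 2 ≤ ∑ j, DD j u y ^ 2 :=
          Finset.single_le_sum (f := fun l => DD l u y ^ 2) (fun l _ => sq_nonneg _)
            (Finset.mem_univ j)
        have h4 : DD j u y ^ 2 ≤ 0 := by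
          have : ∑ j, DD j u y ^ 2 ≤ 0 := by
            by_contra h'
            push Not at h'
            have := mul_pos hc₀ h'
            linarith
          linarith
        have h5 : DD j u y = 0 := by nlinarith [sq_nonneg (DD j u y)]
        rw [h5, mul_zero]
    · exact hdT0 y hy j
  have hfd : ∀ y, fderiv ℝ T y = 0 := by
    intro y
    have : (fderiv ℝ T y : EE n →ₗ[ℝ] ℝ) = 0 := by
      refine (EuclideanSpace.basisFun (Fin n) ℝ).toBasis.ext fun j => ?_
      simpa [DD] using hDT y j
    ext z
    exact LinearMap.congr_fun this z
  obtain ⟨z, hz⟩ : ∃ z, z ∉ Ω := by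
    by_contra h
    push Not at h
    haveI : Nonempty (Fin n) := ⟨⟨0, hn⟩⟩
    have : Ω = Set.univ := Set.eq_univ_of_forall h
    rw [this] at hΩb
    exact NormedSpace.unbounded_univ ℝ (EE n) hΩb
  have hTz : T z = 0 := by simp [T, hz]
  have hTx : T x = 0 := by
    rw [is_const_of_fderiv_eq_zero hT.diff hfd x z, hTz]
  simp only [T, hx, if_true, θ] at hTx
  have := Real.smoothTransition.zero_iff_nonpos.1 hTx
  linarith

end glob

section cplx
variable {n : ℕ}

theorem pd_L (L : ℂ →L[ℝ] ℝ) {U : EE n → ℂ} (i : Fin n) (y : EE n) (hU : DifferentiableAt ℝ U y) :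
    L (pd n i U y) = DD i (fun z => L (U z)) y := by
  unfold pd DD
  have h := (L.hasFDerivAt (x := U y)).comp y hU.hasFDerivAt
  have h3 : fderiv ℝ (fun z => L (U z)) y = _ := h.fderiv
  rw [h3]; simp

theorem lapA_L (L : ℂ →L[ℝ] ℝ) {a : Fin n → Fin n → EE n → ℝ} (ha : ∀ i j, Sm (a i j))
    {U : EE n → ℂ} (hU : ContDiff ℝ (⊤ : ℕ∞) U) (x : EE n) :
    L (lapA n a U x) = PP a (fun z => L (U z)) x := by
  have hpd : ∀ i, ContDiff ℝ (⊤ : ℕ∞) (pd n i U) := fun i =>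
    ContDiff.clm_apply (hU.fderiv_right (by simp)) contDiff_const
  have hg : ∀ j, ContDiff ℝ (⊤ : ℕ∞) (fun y => ∑ i, (a i j y : ℂ) * pd n i U y) := fun j =>
    ContDiff.sum fun i _ => (Complex.ofRealCLM.contDiff.comp (ha i j)).mul (hpd i)
  unfold lapA PP
  rw [map_sum]
  refine Finset.sum_congr rfl fun j _ => ?_
  rw [pd_L L j x ((hg j).differentiable (by simp) x)]
  congr 1
  funext y
  rw [map_sum]
  refine Finset.sum_congr rfl fun i _ => ?_
  rw [← pd_L L i y (hU.differentiable (by simp) y), ← Complex.real_smul, map_smul, smul_eq_mul]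

theorem lapA_congr (a : Fin n → Fin n → EE n → ℝ) {u U : EE n → ℂ} {x : EE n}
    (h : u =ᶠ[nhds x] U) : lapA n a u x = lapA n a U x := by
  unfold lapA
  refine Finset.sum_congr rfl fun j _ => ?_
  unfold pd
  rw [Filter.EventuallyEq.fderiv_eq]
  filter_upwards [h.eventuallyEq_nhds] with y hy
  exact Finset.sum_congr rfl fun i _ => by rw [hy.fderiv_eq]

theorem extend_u {Ω V : Set (EE n)} {u : EE n → ℂ} (hV : IsOpen V) (hΩV : closure Ω ⊆ V)
    (hu : ContDiffOn ℝ (⊤ : ℕ∞) u V) :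
    ∃ U : EE n → ℂ, ContDiff ℝ (⊤ : ℕ∞) U ∧ ∀ x ∈ closure Ω, u =ᶠ[nhds x] U := by
  obtain ⟨f, h0, h1, -⟩ := exists_contMDiffMap_zero_one_nhds_of_isClosed
    (modelWithCornersSelf ℝ (EE n)) (n := (⊤ : ℕ∞)) (s := Vᶜ) (t := closure Ω)
    hV.isClosed_compl isClosed_closure
    (Set.disjoint_left.2 fun x hx hx' => hx (hΩV hx'))
  have hf : ContDiff ℝ (⊤ : ℕ∞) f := f.contMDiff.contDiff
  rw [Filter.eventually_iff, mem_nhdsSet_iff_forall] at h0 h1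
  refine ⟨fun x => (f x : ℂ) * u x, contDiff_iff_contDiffAt.2 fun x => ?_, fun x hx => ?_⟩
  · by_cases hx : x ∈ V
    · exact (Complex.ofRealCLM.contDiff.comp hf).contDiffAt.mul (hu.contDiffAt (hV.mem_nhds hx))
    · refine (contDiffAt_const (c := (0:ℂ))).congr_of_eventuallyEq ?_
      filter_upwards [h0 x hx] with y hy
      simp [hy]
  · filter_upwards [h1 x hx] with y hy
    simp [hy]

end cplx

theorem elliptic_unique_continuation (n : ℕ) (hn : 1 ≤ n)
    (Ω ω : Set (EuclideanSpace ℝ (Fin n)))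
    (hΩo : IsOpen Ω) (hΩb : Bornology.IsBounded Ω) (hΩc : IsConnected Ω)
    (hΩs : SmoothBoundary Ω)
    (hωne : ω.Nonempty) (hωo : IsOpen ω) (hωΩ : ω ⊆ Ω)
    (a : Fin n → Fin n → EuclideanSpace ℝ (Fin n) → ℝ)
    (ha_smooth : ∀ i j, ContDiff ℝ (⊤ : ℕ∞) (a i j))
    (ha_symm : ∀ i j x, a i j x = a j i x)
    -- uniform positive definiteness on a neighborhood of closure(Ω)
    (ha_pos : ∃ V : Set (EuclideanSpace ℝ (Fin n)), IsOpen V ∧ closure Ω ⊆ V ∧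
      ∃ c : ℝ, 0 < c ∧ ∀ x ∈ V, ∀ ξ : Fin n → ℝ,
        c * ∑ i, (ξ i) ^ 2 ≤ ∑ i, ∑ j, a i j x * ξ i * ξ j)
    (lam : ℂ) (u : EuclideanSpace ℝ (Fin n) → ℂ)
    -- u is smooth on a neighborhood of closure(Ω)
    (hu : ∃ V : Set (EuclideanSpace ℝ (Fin n)), IsOpen V ∧ closure Ω ⊆ V ∧
      ContDiffOn ℝ (⊤ : ℕ∞) u V)
    -- Δ_A u = λ² u on Ω
    (hpde : ∀ x ∈ Ω, lapA n a u x = lam ^ 2 * u x)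
    -- u = 0 on ∂Ω
    (hdir : ∀ x ∈ frontier Ω, u x = 0)
    -- λ·u = 0 on ω
    (hvan : ∀ x ∈ ω, lam * u x = 0) :
    ∀ x ∈ Ω, u x = 0 := by
  obtain ⟨V, hVo, hΩV, c, hc, hell0⟩ := ha_pos
  obtain ⟨V', hVo', hΩV', hu'⟩ := hu
  obtain ⟨U, hU, huU⟩ := extend_u hVo' hΩV' hu'
  have hell : ∀ x ∈ Ω, ∀ ξ : Fin n → ℝ,
      c * ∑ i, ξ i ^ 2 ≤ ∑ k, (∑ i, a i k x * ξ i) * ξ k := by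
    intro x hx ξ
    refine (hell0 x (hΩV (subset_closure hx)) ξ).trans (le_of_eq ?_)
    rw [Finset.sum_comm]
    simp only [Finset.sum_mul]
  let u₁ : EE n → ℝ := fun x => Complex.reCLM (U x)
  let u₂ : EE n → ℝ := fun x => Complex.imCLM (U x)
  have hu₁ : Sm u₁ := Complex.reCLM.contDiff.comp hU
  have hu₂ : Sm u₂ := Complex.imCLM.contDiff.comp hU
  have hlap : ∀ x ∈ Ω, lapA n a U x = lam ^ 2 * U x := by
    intro x hx
    rw [← lapA_congr a (huU x (subset_closure hx)), hpde x hx,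
      (huU x (subset_closure hx)).eq_of_nhds]
  have hP₁ : ∀ x ∈ Ω, PP a u₁ x = (lam ^ 2).re * u₁ x - (lam ^ 2).im * u₂ x := by
    intro x hx
    rw [← lapA_L Complex.reCLM ha_smooth hU x, hlap x hx]
    exact Complex.mul_re _ _
  have hP₂ : ∀ x ∈ Ω, PP a u₂ x = (lam ^ 2).im * u₁ x + (lam ^ 2).re * u₂ x := by
    intro x hx
    rw [← lapA_L Complex.imCLM ha_smooth hU x, hlap x hx]
    refine (Complex.mul_im _ _).trans ?_
    show _ = (lam ^ 2).im * (U x).re + (lam ^ 2).re * (U x).im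
    ring
  suffices hfin : ∀ x ∈ Ω, u₁ x = 0 ∧ u₂ x = 0 by
    intro x hx
    rw [(huU x (subset_closure hx)).eq_of_nhds]
    exact Complex.ext (hfin x hx).1 (hfin x hx).2
  by_cases hl : lam = 0
  · have hUd : ∀ x ∈ frontier Ω, U x = 0 := fun x hx => by
      rw [← (huU x (frontier_subset_closure hx)).eq_of_nhds, hdir x hx]
    have gen : ∀ L : ℂ →L[ℝ] ℝ, ∀ x ∈ Ω, L (U x) ≤ 0 := by
      intro L
      refine max_pr hn ha_smooth hc hell (u := fun x => L (U x)) (L.contDiff.comp hU) ?_ hΩo hΩb ?_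
      · intro x hx
        rw [← lapA_L L ha_smooth hU x, hlap x hx, hl]
        simp
      · intro x hx
        rw [hUd x hx, map_zero]
    intro x hx
    have h1 := gen Complex.reCLM x hx
    have h2 := gen (-Complex.reCLM) x hx
    have h3 := gen Complex.imCLM x hx
    have h4 := gen (-Complex.imCLM) x hx
    simp only [ContinuousLinearMap.neg_apply] at h2 h4
    exact ⟨le_antisymm h1 (by simpa using! h2), le_antisymm h3 (by simpa using! h4)⟩
  · refine uc_glob ha_smooth ha_symm hc hell hu₁ hu₂ hP₁ hP₂ hΩo hΩc hωne hωo hωΩ ?_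
    intro x hx
    have h1 : u x = 0 := (mul_eq_zero.1 (hvan x hx)).resolve_left hl
    have h2 : U x = 0 := by rw [← (huU x (subset_closure (hωΩ hx))).eq_of_nhds, h1]
    simp [u₁, u₂, h2]
end
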